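/- arXiv:math/0502547 — 2 statements merged into one kernel-verified Lean document; each statement's English description precedes it below -/
import Mathlib

section
/- The configuration pairing between the Forest module Φ_n and the Diagram module Δ_n descends to a perfect pairing between Pois_k(n) and Siop_k(n) for every k. -/
open scoped Classical

noncomputable section

namespace GTPairing

/-- Planar binary trees with natural-number-labeled leaves.  A `PTree` is a rooted
binary (trivalent) tree embedded in the upper half plane; `node l r` has `l` as its
left branch and `r` as its right branch. -/
inductive PTree : Type
  | leaf (a : ℕ) : PTree
  | node (l r : PTree) : PTree
  deriving DecidableEq

namespace PTree

/-- The labels of the leaves, in planar (left-to-right) order. -/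
def leaves : PTree → List ℕ
  | .leaf a => [a]
  | .node l r => l.leaves ++ r.leaves

/-- The internal (trivalent) vertices of a planar tree, recorded as the subtrees they
support, listed in the left-to-right (in-order) planar order. -/
def nodesList : PTree → List PTree
  | .leaf _ => []
  | .node l r => l.nodesList ++ (PTree.node l r :: r.nodesList)

/-- `nadir t i j` is the nadir (lowest vertex) of the shortest path in `t` between the
leaves labeled `i` and `j`, recorded as the subtree it supports, together with `true`
if the leaf labeled `i` lies over the left branch of the nadir (and `j` over the
right), i.e. if the path travels from left to right at its nadir. -/
def nadir : PTree → ℕ → ℕ → Option (PTree × Bool)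
  | .leaf _, _, _ => none
  | .node l r, i, j =>
    if i ∈ l.leaves ∧ j ∈ r.leaves then some (.node l r, true)
    else if j ∈ l.leaves ∧ i ∈ r.leaves then some (.node l r, false)
    else if i ∈ l.leaves ∧ j ∈ l.leaves then nadir l i j
    else if i ∈ r.leaves ∧ j ∈ r.leaves then nadir r i j
    else none

/-- Fusing: `graft t m s` identifies the root edge of `s` with the leaf edge of `t`
labeled by `m`, i.e. substitutes `s` for the leaf labeled `m`. -/
def graft : PTree → ℕ → PTree → PTree
  | .leaf a, m, s => if a = m then s else .leaf a
  | .node l r, m, s => .node (l.graft m s) (r.graft m s)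

/-- Relabel the leaves of a tree. -/
def relabel (f : ℕ → ℕ) : PTree → PTree
  | .leaf a => .leaf (f a)
  | .node l r => .node (l.relabel f) (r.relabel f)

end PTree

/-- The nadir of the path between the two endpoints of an edge, forgetting planar
direction data. -/
def nadirFst (t : PTree) (e : ℕ × ℕ) : Option PTree := (t.nadir e.1 e.2).map Prod.fst

/-- The (even) configuration pairing between a set of oriented edges `E` (a Graph) and
a planar binary tree `t` (a Tree): it is `0` unless `e ↦ β_{G,T}(e)` (sending an edge
to the nadir of the path between the corresponding leaves) is a bijection from the
edges onto the internal vertices of `t`, in which case it is `(-1)^N` where `N` is the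
number of edges `(i,j)` whose path travels from left to right (`i` over the left
branch) at its nadir. -/
def pairPT (E : Multiset (ℕ × ℕ)) (t : PTree) : ℤ :=
  if E.map (nadirFst t) = ((t.nodesList.map some : List (Option PTree)) : Multiset (Option PTree))
  then (-1) ^ (Multiset.card (E.filter (fun e => (t.nadir e.1 e.2).map Prod.snd = some true)))
  else 0

/-- A Tree with leaves labeled bijectively by the finite set `S`. -/
def IsTreeOn (S : Finset ℕ) (t : PTree) : Prop := t.leaves.Nodup ∧ t.leaves.toFinset = S

def TreeOn (S : Finset ℕ) : Type := {t : PTree // IsTreeOn S t}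

/-- Adjacency relation determined by a multiset of oriented edges. -/
def Adj (E : Multiset (ℕ × ℕ)) (a b : ℕ) : Prop := (a, b) ∈ E ∨ (b, a) ∈ E

/-- Connectivity of an edge multiset on the vertex set `S`. -/
def ConnOn (S : Finset ℕ) (E : Multiset (ℕ × ℕ)) : Prop :=
  ∀ a ∈ S, ∀ b ∈ S, Relation.ReflTransGen (Adj E) a b

/-- A Graph on the vertex set `S`: a connected graph with oriented edges (each edge
joining two distinct vertices of `S`). -/
def IsGraphOn (S : Finset ℕ) (E : Multiset (ℕ × ℕ)) : Prop :=
  (∀ e ∈ E, e.1 ∈ S ∧ e.2 ∈ S ∧ e.1 ≠ e.2) ∧ ConnOn S E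

def GraphOn (S : Finset ℕ) : Type := {E : Multiset (ℕ × ℕ) // IsGraphOn S E}

variable (R : Type) [CommRing R]

/-- `Θ_S`: the free module on Trees with leaves labeled by `S`. -/
abbrev ThetaF (S : Finset ℕ) : Type := TreeOn S →₀ R

/-- `Γ_S`: the free module on Graphs with vertices labeled by `S`. -/
abbrev GammaF (S : Finset ℕ) : Type := GraphOn S →₀ R

variable {R}

/-- The configuration pairing, extended bilinearly to the free modules. -/
def pairGT {S : Finset ℕ} (β : GammaF R S) (α : ThetaF R S) : R :=
  β.sum fun G b => α.sum fun T a => b * a * ((pairPT G.1 T.1 : ℤ) : R)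

/-- The basis element of a free module on a subtype, when the defining property holds
(and `0` otherwise; in all uses below the property does hold). -/
def bsingle {α : Type} (P : α → Prop) (a : α) : ({x : α // P x} →₀ R) :=
  if h : P a then Finsupp.single ⟨a, h⟩ (1 : R) else 0

variable (R)

/-- Jacobi combinations of Trees: the sum of the three Trees obtained from the unique
3-leaf Tree by fusing Trees `A`, `B`, `C` onto its three leaves in the three
cyclically related orders and fusing a Tree `D` onto its root (at the leaf `m` of `D`). -/
def jacobiSet (S : Finset ℕ) : Set (ThetaF R S) :=
  { x | ∃ (D A B C : PTree) (m : ℕ) (T₁ T₂ T₃ : TreeOn S),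
      D.leaves.Nodup ∧ m ∈ D.leaves ∧
      T₁.1 = D.graft m (.node (.node A B) C) ∧
      T₂.1 = D.graft m (.node (.node B C) A) ∧
      T₃.1 = D.graft m (.node (.node C A) B) ∧
      x = Finsupp.single T₁ 1 + Finsupp.single T₂ 1 + Finsupp.single T₃ 1 }

/-- Symmetry combinations of Trees: the sum of two Trees which are isomorphic as
labeled graphs and have the same planar ordering of input edges at every internal
vertex except exactly one (here: exactly the vertex at the leaf `m` of `D`, whose two
branches `A` and `B` are switched). -/
def treeSymmSet (S : Finset ℕ) : Set (ThetaF R S) :=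
  { x | ∃ (D A B : PTree) (m : ℕ) (T₁ T₂ : TreeOn S),
      D.leaves.Nodup ∧ m ∈ D.leaves ∧
      T₁.1 = D.graft m (.node A B) ∧
      T₂.1 = D.graft m (.node B A) ∧
      x = Finsupp.single T₁ 1 + Finsupp.single T₂ 1 }

/-- The submodule `J_S ⊆ Θ_S` generated by Jacobi and symmetry combinations. -/
def Jsub (S : Finset ℕ) : Submodule R (ThetaF R S) :=
  Submodule.span R (jacobiSet R S ∪ treeSymmSet R S)

/-- Arnold combinations of Graphs: sums of three Graphs which agree except on edges
among three fixed distinct vertices `i`, `j`, `k`, where they contain respectively the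
edge pairs `{i→j, j→k}`, `{j→k, k→i}` and `{k→i, i→j}`. -/
def arnoldSet (S : Finset ℕ) : Set (GammaF R S) :=
  { x | ∃ (i j k : ℕ) (E₀ : Multiset (ℕ × ℕ)) (G₁ G₂ G₃ : GraphOn S),
      i ≠ j ∧ j ≠ k ∧ i ≠ k ∧
      G₁.1 = (i, j) ::ₘ (j, k) ::ₘ E₀ ∧
      G₂.1 = (j, k) ::ₘ (k, i) ::ₘ E₀ ∧
      G₃.1 = (k, i) ::ₘ (i, j) ::ₘ E₀ ∧
      x = Finsupp.single G₁ 1 + Finsupp.single G₂ 1 + Finsupp.single G₃ 1 }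

/-- Symmetry combinations of Graphs: sums of two Graphs which differ only in the
orientation of exactly one edge. -/
def graphSymmSet (S : Finset ℕ) : Set (GammaF R S) :=
  { x | ∃ (i j : ℕ) (E₀ : Multiset (ℕ × ℕ)) (G₁ G₂ : GraphOn S),
      G₁.1 = (i, j) ::ₘ E₀ ∧ G₂.1 = (j, i) ::ₘ E₀ ∧
      x = Finsupp.single G₁ 1 + Finsupp.single G₂ 1 }

/-- Graphs having two edges with the same pair of endpoints. -/
def doubledSet (S : Finset ℕ) : Set (GammaF R S) :=
  { x | ∃ (i j : ℕ) (E₀ : Multiset (ℕ × ℕ)) (G : GraphOn S),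
      (G.1 = (i, j) ::ₘ (i, j) ::ₘ E₀ ∨ G.1 = (i, j) ::ₘ (j, i) ::ₘ E₀) ∧
      x = Finsupp.single G 1 }

/-- The submodule `I_S ⊆ Γ_S` generated by Arnold combinations, symmetry combinations
and Graphs with doubled edges. -/
def Isub (S : Finset ℕ) : Submodule R (GammaF R S) :=
  Submodule.span R (arnoldSet R S ∪ graphSymmSet R S ∪ doubledSet R S)

/-- `Lie(S) = Θ_S / J_S`. -/
abbrev LieQ (S : Finset ℕ) : Type := ThetaF R S ⧸ Jsub R S

/-- `Eil(S) = Γ_S / I_S`. -/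
abbrev EilQ (S : Finset ℕ) : Type := GammaF R S ⧸ Isub R S

end GTPairing

namespace GTPairing

/-- A Forest on `{0,…,n-1}`: an unordered collection of Trees whose leaf-label sets
partition `{0,…,n-1}`. -/
def IsForestOn (n : ℕ) (F : Finset PTree) : Prop :=
  (∀ t ∈ F, t.leaves.Nodup) ∧
  (∀ t ∈ F, ∀ s ∈ F, t ≠ s → ∀ a ∈ t.leaves, a ∉ s.leaves) ∧
  (∀ t ∈ F, ∀ a ∈ t.leaves, a < n) ∧
  (∀ a, a < n → ∃ t ∈ F, a ∈ t.leaves)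

def ForestOn (n : ℕ) : Type := {F : Finset PTree // IsForestOn n F}

/-- The total number of internal vertices of a Forest. -/
def forestDeg (F : Finset PTree) : ℕ := ∑ t ∈ F, t.nodesList.length

/-- A Diagram on `{0,…,n-1}`: a possibly disconnected graph with oriented edges
joining distinct vertices in `{0,…,n-1}`. -/
def IsDiagOn (n : ℕ) (E : Multiset (ℕ × ℕ)) : Prop :=
  ∀ e ∈ E, e.1 < n ∧ e.2 < n ∧ e.1 ≠ e.2

def DiagOn (n : ℕ) : Type := {E : Multiset (ℕ × ℕ) // IsDiagOn n E}

variable (R : Type) [CommRing R]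

/-- `Φ_n`: the free module on Forests. -/
abbrev PhiF (n : ℕ) : Type := ForestOn n →₀ R

/-- `Δ_n`: the free module on Diagrams. -/
abbrev DeltaF (n : ℕ) : Type := DiagOn n →₀ R

variable {R}

/-- The edges of a Diagram with both endpoints among the leaves of the tree `t`. -/
def edgesIn (E : Multiset (ℕ × ℕ)) (t : PTree) : Multiset (ℕ × ℕ) :=
  E.filter fun e => e.1 ∈ t.leaves ∧ e.2 ∈ t.leaves

/-- `ρ(D) = ρ(F)`: the partition of the vertices by connected components of the
Diagram `E` coincides with the partition by the component Trees of the Forest `F`,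
i.e. every edge joins two leaves of a single tree and the edges within each tree
connect that tree's leaves. -/
def sameRho (E : Multiset (ℕ × ℕ)) (F : Finset PTree) : Prop :=
  (∀ e ∈ E, ∃ t ∈ F, e.1 ∈ t.leaves ∧ e.2 ∈ t.leaves) ∧
  ∀ t ∈ F, ConnOn t.leaves.toFinset (edgesIn E t)

/-- The configuration pairing between a Diagram and a Forest: zero unless
`ρ(D) = ρ(F)`, in which case it is the product over the component Trees of the
configuration pairings with the matching component Graphs. -/
def pairDF (E : Multiset (ℕ × ℕ)) (F : Finset PTree) : ℤ :=
  if sameRho E F then ∏ t ∈ F, pairPT (edgesIn E t) t else 0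

/-- The Diagram–Forest configuration pairing, extended bilinearly. -/
def pairDFF {n : ℕ} (y : DeltaF R n) (x : PhiF R n) : R :=
  y.sum fun D c => x.sum fun F d => c * d * ((pairDF D.1 F.1 : ℤ) : R)

variable (R)

/-- Jacobi combinations of Forests: a Jacobi combination of Trees in one component,
all other component Trees fixed. -/
def forestJacobiSet (n : ℕ) : Set (PhiF R n) :=
  { x | ∃ (F₀ : Finset PTree) (D A B C : PTree) (m : ℕ) (F₁ F₂ F₃ : ForestOn n),
      D.leaves.Nodup ∧ m ∈ D.leaves ∧
      D.graft m (.node (.node A B) C) ∉ F₀ ∧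
      D.graft m (.node (.node B C) A) ∉ F₀ ∧
      D.graft m (.node (.node C A) B) ∉ F₀ ∧
      F₁.1 = insert (D.graft m (.node (.node A B) C)) F₀ ∧
      F₂.1 = insert (D.graft m (.node (.node B C) A)) F₀ ∧
      F₃.1 = insert (D.graft m (.node (.node C A) B)) F₀ ∧
      x = Finsupp.single F₁ 1 + Finsupp.single F₂ 1 + Finsupp.single F₃ 1 }

/-- Symmetry combinations of Forests: a symmetry combination of Trees in one
component, all other component Trees fixed. -/
def forestSymmSet (n : ℕ) : Set (PhiF R n) :=
  { x | ∃ (F₀ : Finset PTree) (D A B : PTree) (m : ℕ) (F₁ F₂ : ForestOn n),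
      D.leaves.Nodup ∧ m ∈ D.leaves ∧
      D.graft m (.node A B) ∉ F₀ ∧ D.graft m (.node B A) ∉ F₀ ∧
      F₁.1 = insert (D.graft m (.node A B)) F₀ ∧
      F₂.1 = insert (D.graft m (.node B A)) F₀ ∧
      x = Finsupp.single F₁ 1 + Finsupp.single F₂ 1 }

/-- The submodule `J_n ⊆ Φ_n`. -/
def JsubF (n : ℕ) : Submodule R (PhiF R n) :=
  Submodule.span R (forestJacobiSet R n ∪ forestSymmSet R n)

/-- Arnold combinations of Diagrams. -/
def arnoldSetD (n : ℕ) : Set (DeltaF R n) :=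
  { x | ∃ (i j k : ℕ) (E₀ : Multiset (ℕ × ℕ)) (G₁ G₂ G₃ : DiagOn n),
      i ≠ j ∧ j ≠ k ∧ i ≠ k ∧
      G₁.1 = (i, j) ::ₘ (j, k) ::ₘ E₀ ∧
      G₂.1 = (j, k) ::ₘ (k, i) ::ₘ E₀ ∧
      G₃.1 = (k, i) ::ₘ (i, j) ::ₘ E₀ ∧
      x = Finsupp.single G₁ 1 + Finsupp.single G₂ 1 + Finsupp.single G₃ 1 }

/-- Symmetry combinations of Diagrams: two Diagrams differing in the orientation of
exactly one edge. -/
def diagSymmSet (n : ℕ) : Set (DeltaF R n) :=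
  { x | ∃ (i j : ℕ) (E₀ : Multiset (ℕ × ℕ)) (G₁ G₂ : DiagOn n),
      G₁.1 = (i, j) ::ₘ E₀ ∧ G₂.1 = (j, i) ::ₘ E₀ ∧
      x = Finsupp.single G₁ 1 + Finsupp.single G₂ 1 }

/-- Diagrams having two edges with the same pair of endpoints. -/
def doubledSetD (n : ℕ) : Set (DeltaF R n) :=
  { x | ∃ (i j : ℕ) (E₀ : Multiset (ℕ × ℕ)) (G : DiagOn n),
      (G.1 = (i, j) ::ₘ (i, j) ::ₘ E₀ ∨ G.1 = (i, j) ::ₘ (j, i) ::ₘ E₀) ∧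
      x = Finsupp.single G 1 }

/-- The submodule `I_n ⊆ Δ_n`. -/
def IsubD (n : ℕ) : Submodule R (DeltaF R n) :=
  Submodule.span R (arnoldSetD R n ∪ diagSymmSet R n ∪ doubledSetD R n)

/-- `Pois(n) = Φ_n / J_n`. -/
abbrev PoisQ (n : ℕ) : Type := PhiF R n ⧸ JsubF R n

/-- `Siop(n) = Δ_n / I_n`. -/
abbrev SiopQ (n : ℕ) : Type := DeltaF R n ⧸ IsubD R n

/-- `Φ_n^k`: the span of Forests with `k` internal vertices in total. -/
def PhiK (n k : ℕ) : Submodule R (PhiF R n) :=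
  Submodule.span R {x | ∃ F : ForestOn n, forestDeg F.1 = k ∧ x = Finsupp.single F 1}

/-- `Δ_n^k`: the span of Diagrams with `k` edges. -/
def DeltaK (n k : ℕ) : Submodule R (DeltaF R n) :=
  Submodule.span R {x | ∃ D : DiagOn n, Multiset.card D.1 = k ∧ x = Finsupp.single D 1}

/-- `Pois_k(n)`: the image of `Φ_n^k` in `Pois(n)`. -/
def PoisK (n k : ℕ) : Submodule R (PoisQ R n) := (PhiK R n k).map (JsubF R n).mkQ

/-- `Siop_k(n)`: the image of `Δ_n^k` in `Siop(n)`. -/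
def SiopK (n k : ℕ) : Submodule R (SiopQ R n) := (DeltaK R n k).map (IsubD R n).mkQ

end GTPairing

/-!
The configuration pairings with a fixed Forest `F` are the coefficients of one polynomial in the
variables `X (i, j)`, the oriented edges: the product over the internal vertices of `F` of the
linear forms `∑ X (j, i) - ∑ X (i, j)`, where `i` runs over the leaves on the left branch and `j`
over those on the right branch of the vertex. Such a polynomial is multiaffine, so its coefficients
are iterated derivatives. The forms are additive in each branch, which gives the Jacobi relation,
and a Leibniz argument on products gives the Arnold relation; hence the pairing descends.

Perfection follows once both quotients have finite spanning families which are dual to each other.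
These are built by adding one label at a time. The Jacobi relation pushes the leaf `n` upwards until
it forms a cherry with a single leaf, and the Arnold relation lowers the valence of the vertex `n`
to at most one; setting the variables incident to `n` to zero shows that the resulting families are
again dual.
-/

namespace GTPairing

section Multiaffine

open MvPolynomial

variable {σ A : Type*} [CommSemiring A]

/-- A polynomial of degree at most one in each variable. -/
def IsMultiaffine (P : MvPolynomial σ A) : Prop := ∀ e, P.degreeOf e ≤ 1

lemma pderiv_pderiv_comm {A : Type*} [CommRing A] (e e' : σ) (P : MvPolynomial σ A) :
    pderiv e (pderiv e' P) = pderiv e' (pderiv e P) := by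
  have h : ⁅pderiv (R := A) e, pderiv (R := A) e'⁆ = 0 :=
    derivation_ext fun i => by
      simp [Derivation.commutator_apply, pderiv_X, Pi.single_apply, apply_ite]
  simpa [Derivation.commutator_apply, sub_eq_zero] using congrArg (fun d => d P) h

lemma toFinsupp_cons [DecidableEq σ] (e : σ) (E : Multiset σ) :
    Multiset.toFinsupp (e ::ₘ E) = Multiset.toFinsupp E + Finsupp.single e 1 := by
  rw [← Multiset.singleton_add, map_add, Multiset.toFinsupp_singleton, add_comm]

lemma toFinsupp_filter [DecidableEq σ] (p : σ → Prop) [DecidablePred p] (E : Multiset σ) :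
    Multiset.toFinsupp (E.filter p) = (Multiset.toFinsupp E).filter p := by
  ext e
  by_cases h : p e <;> simp [h]

lemma pderiv_eq_zero_of_mem_supported {V : Set σ} {P : MvPolynomial σ A}
    (hP : P ∈ supported A V) {e : σ} (he : e ∉ V) : pderiv e P = 0 :=
  pderiv_eq_zero_of_notMem_vars fun h => he (mem_supported.1 hP h)

lemma IsMultiaffine.coeff_eq_zero {P : MvPolynomial σ A} (hP : IsMultiaffine P) {m : σ →₀ ℕ} {e : σ}
    (he : 1 < m e) : coeff m P = 0 := by
  by_contra h
  exact absurd (degreeOf_le_iff.1 (hP e) m (mem_support_iff.2 h)) (by omega)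

lemma IsMultiaffine.coeff_cons [DecidableEq σ] {P : MvPolynomial σ A} (hP : IsMultiaffine P)
    (e : σ) (E : Multiset σ) :
    coeff (Multiset.toFinsupp (e ::ₘ E)) P = coeff (Multiset.toFinsupp E) (pderiv e P) := by
  rw [coeff_pderiv, toFinsupp_cons]
  rcases Nat.eq_zero_or_pos (Multiset.toFinsupp E e) with he | he
  · simp [he]
  · rw [hP.coeff_eq_zero (e := e) (by simpa using he), zero_mul]

lemma IsMultiaffine.pderiv {P : MvPolynomial σ A} (hP : IsMultiaffine P) (e : σ) :
    IsMultiaffine (pderiv e P) := fun e' => degreeOf_le_iff.2 fun m hm => by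
  by_contra! h
  refine mem_support_iff.1 hm ?_
  rw [coeff_pderiv, hP.coeff_eq_zero (e := e') (by simp; omega), zero_mul]

lemma IsMultiaffine.pderiv_pderiv_self {P : MvPolynomial σ A} (hP : IsMultiaffine P) (e : σ) :
    MvPolynomial.pderiv e (MvPolynomial.pderiv e P) = 0 := by
  ext m
  rw [coeff_pderiv, coeff_pderiv, hP.coeff_eq_zero (e := e) (by simp), zero_mul, zero_mul,
    coeff_zero]

lemma isMultiaffine_one : IsMultiaffine (1 : MvPolynomial σ A) := fun e => by
  rw [← C_1, degreeOf_C]; exact zero_le_one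

lemma IsMultiaffine.mul {V W : Set σ} (hVW : Disjoint V W) {P Q : MvPolynomial σ A}
    (hPV : P ∈ supported A V) (hQW : Q ∈ supported A W)
    (hP : IsMultiaffine P) (hQ : IsMultiaffine Q) : IsMultiaffine (P * Q) := by
  intro e
  have hzero : P.degreeOf e = 0 ∨ Q.degreeOf e = 0 := by
    by_contra! h
    exact Set.disjoint_left.1 hVW (mem_supported.1 hPV (mem_vars_iff_degreeOf_ne_zero.2 h.1))
      (mem_supported.1 hQW (mem_vars_iff_degreeOf_ne_zero.2 h.2))
  have hmul := degreeOf_mul_le e P Q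
  have hPe := hP e
  have hQe := hQ e
  omega

lemma support_subset_of_mem_supported {V : Set σ} {P : MvPolynomial σ A} (hP : P ∈ supported A V)
    {m : σ →₀ ℕ} (hm : coeff m P ≠ 0) {e : σ} (he : m e ≠ 0) : e ∈ V :=
  mem_supported.1 hP ((mem_vars_iff_mem_support e).2
    ⟨m, mem_support_iff.2 hm, Finsupp.mem_support_iff.2 he⟩)

lemma coeff_mul_of_disjoint [DecidableEq σ] {V W : Set σ} [DecidablePred (· ∈ V)]
    [DecidablePred (· ∈ W)] (hVW : Disjoint V W)
    {P Q : MvPolynomial σ A} (hP : P ∈ supported A V) (hQ : Q ∈ supported A W) (E : Multiset σ) :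
    coeff (Multiset.toFinsupp E) (P * Q) =
      if ∀ e ∈ E, e ∈ V ∨ e ∈ W then
        coeff (Multiset.toFinsupp (E.filter (· ∈ V))) P *
          coeff (Multiset.toFinsupp (E.filter (· ∈ W))) Q
      else 0 := by
  set m := Multiset.toFinsupp E with hm
  have hmem (e : σ) : e ∈ E ↔ m e ≠ 0 := by simp [hm]
  have key (a b : σ →₀ ℕ) (hab : a + b = m) (h : coeff a P * coeff b Q ≠ 0) :
      (∀ e ∈ E, e ∈ V ∨ e ∈ W) ∧ a = m.filter (· ∈ V) ∧ b = m.filter (· ∈ W) := by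
    have ha (e : σ) (he : a e ≠ 0) : e ∈ V :=
      support_subset_of_mem_supported hP (left_ne_zero_of_mul h) he
    have hb (e : σ) (he : b e ≠ 0) : e ∈ W :=
      support_subset_of_mem_supported hQ (right_ne_zero_of_mul h) he
    have hd (e : σ) : e ∈ V → e ∉ W := fun h h' => Set.disjoint_left.1 hVW h h'
    simp only [hmem, ← hab, Finsupp.ext_iff, Finsupp.filter_apply, Finsupp.add_apply]
    exact ⟨by grind, by grind, by grind⟩
  rw [coeff_mul, toFinsupp_filter, toFinsupp_filter]
  split_ifs with hE
  · refine Finset.sum_eq_single (m.filter (· ∈ V), m.filter (· ∈ W)) ?_ ?_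
    · rintro ⟨a, b⟩ hab hne
      by_contra h
      obtain ⟨-, rfl, rfl⟩ := key a b (Finset.HasAntidiagonal.mem_antidiagonal.1 hab) h
      exact hne rfl
    · intro hn
      refine absurd (Finset.HasAntidiagonal.mem_antidiagonal.2 ?_) hn
      ext e
      have hd : e ∈ V → e ∉ W := fun h h' => Set.disjoint_left.1 hVW h h'
      have := hE e
      rw [hmem] at this
      simp only [Finsupp.filter_apply, Finsupp.add_apply]
      grind
  · refine Finset.sum_eq_zero fun ab hab => ?_
    by_contra h
    exact hE (key ab.1 ab.2 (Finset.HasAntidiagonal.mem_antidiagonal.1 hab) h).1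

lemma coeff_toFinsupp_one [DecidableEq σ] (E : Multiset σ) :
    coeff (Multiset.toFinsupp E) (1 : MvPolynomial σ A) = if E = 0 then 1 else 0 := by
  simp [coeff_one, eq_comm (a := (0 : σ →₀ ℕ))]

variable {ι : Type*} {s : Finset ι} {V : ι → Set σ} {P : ι → MvPolynomial σ A}

lemma prod_mem_supported (hP : ∀ i ∈ s, P i ∈ supported A (V i)) :
    ∏ i ∈ s, P i ∈ supported A (⋃ i ∈ s, V i) :=
  Subalgebra.prod_mem _ fun i hi =>
    supported_mono (Set.subset_biUnion_of_mem (u := V) (Finset.mem_coe.2 hi)) (hP i hi)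

lemma IsMultiaffine.prod (hV : (s : Set ι).PairwiseDisjoint V)
    (hPV : ∀ i ∈ s, P i ∈ supported A (V i)) (hP : ∀ i ∈ s, IsMultiaffine (P i)) :
    IsMultiaffine (∏ i ∈ s, P i) := by
  induction s using Finset.induction with
  | empty => simpa using isMultiaffine_one
  | insert i s hi ih =>
    rw [Finset.coe_insert, Set.pairwiseDisjoint_insert_of_notMem (by simpa using hi)] at hV
    simp only [Finset.mem_coe] at hV
    simp only [Finset.mem_insert, forall_eq_or_imp] at hPV hP
    rw [Finset.prod_insert hi]
    exact IsMultiaffine.mul (Set.disjoint_iUnion₂_right.2 hV.2) hPV.1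
      (prod_mem_supported hPV.2) hP.1 (ih hV.1 hPV.2 hP.2)

lemma coeff_prod_of_pairwiseDisjoint [DecidableEq σ] [∀ i, DecidablePred (· ∈ V i)]
    (hV : (s : Set ι).PairwiseDisjoint V)
    (hPV : ∀ i ∈ s, P i ∈ supported A (V i)) (E : Multiset σ) :
    coeff (Multiset.toFinsupp E) (∏ i ∈ s, P i) =
      if ∀ e ∈ E, ∃ i ∈ s, e ∈ V i then
        ∏ i ∈ s, coeff (Multiset.toFinsupp (E.filter (· ∈ V i))) (P i)
      else 0 := by
  induction s using Finset.induction generalizing E with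
  | empty => simp [coeff_toFinsupp_one, Multiset.eq_zero_iff_forall_notMem]
  | insert i s hi ih =>
    rw [Finset.coe_insert, Set.pairwiseDisjoint_insert_of_notMem (by simpa using hi)] at hV
    simp only [Finset.mem_coe] at hV
    simp only [Finset.mem_insert, forall_eq_or_imp] at hPV
    have hrest (j : ι) (hj : j ∈ s) :
        (E.filter (· ∈ ⋃ k ∈ s, V k)).filter (· ∈ V j) = E.filter (· ∈ V j) := by
      rw [Multiset.filter_filter]
      exact Multiset.filter_congr fun e _ => and_iff_left_of_imp (Set.mem_biUnion hj)
    rw [Finset.prod_insert hi, coeff_mul_of_disjoint (Set.disjoint_iUnion₂_right.2 hV.2) hPV.1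
      (prod_mem_supported hPV.2), ih hV.1 hPV.2, Finset.prod_insert hi,
      Finset.prod_congr rfl fun j hj => by rw [hrest j hj]]
    simp only [Multiset.mem_filter, Set.mem_iUnion₂, exists_prop, and_imp, imp_self, implies_true,
      if_true, Finset.exists_mem_insert]

lemma eq_single_of_isHomogeneous_one {φ : MvPolynomial σ A} (hφ : φ.IsHomogeneous 1) {m : σ →₀ ℕ}
    (hm : coeff m φ ≠ 0) {e : σ} (he : m e ≠ 0) : m = Finsupp.single e 1 := by
  have hdeg : m.degree = 1 := not_imp_comm.1 hφ.coeff_eq_zero hm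
  obtain ⟨m', rfl⟩ := exists_add_of_le (Finsupp.single_le_iff.2 (Nat.one_le_iff_ne_zero.2 he))
  rw [map_add, Finsupp.degree_single, Nat.add_eq_left, Finsupp.degree_eq_zero_iff] at hdeg
  rw [hdeg, add_zero]

lemma pderiv_of_isHomogeneous_one {φ : MvPolynomial σ A} (hφ : φ.IsHomogeneous 1) (e : σ) :
    pderiv e φ = C (coeff (Finsupp.single e 1) φ) := by
  have h : (pderiv e φ).IsHomogeneous 0 := hφ.pderiv
  rw [totalDegree_eq_zero_iff_eq_C.1 ((totalDegree_zero_iff_isHomogeneous _).2 h), coeff_pderiv]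
  simp

lemma mem_supported_of_isHomogeneous_one {φ : MvPolynomial σ A} (hφ : φ.IsHomogeneous 1)
    {V : Set σ} (hV : ∀ e, coeff (Finsupp.single e 1) φ ≠ 0 → e ∈ V) : φ ∈ supported A V :=
  mem_supported.2 fun e he => by
    obtain ⟨m, hm, hme⟩ := (mem_vars_iff_mem_support e).1 he
    rw [mem_support_iff] at hm
    obtain rfl := eq_single_of_isHomogeneous_one hφ hm (Finsupp.mem_support_iff.1 hme)
    exact hV e hm

lemma isMultiaffine_of_isHomogeneous_one {φ : MvPolynomial σ A} (hφ : φ.IsHomogeneous 1) :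
    IsMultiaffine φ := fun e =>
  (degreeOf_le_totalDegree φ e).trans hφ.totalDegree_le

lemma pderiv_prod_of_pairwiseDisjoint [DecidableEq ι] (hV : (s : Set ι).PairwiseDisjoint V)
    (hPV : ∀ i ∈ s, P i ∈ supported A (V i)) {i : ι} (hi : i ∈ s) {e : σ} (he : e ∈ V i) :
    pderiv e (∏ j ∈ s, P j) = pderiv e (P i) * ∏ j ∈ s.erase i, P j := by
  have herase : pderiv e (∏ j ∈ s.erase i, P j) = 0 := by
    refine pderiv_eq_zero_of_mem_supported
      (prod_mem_supported fun j hj => hPV j (Finset.mem_of_mem_erase hj)) fun h => ?_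
    obtain ⟨j, hj, hej⟩ := Set.mem_iUnion₂.1 h
    obtain ⟨hji, hj⟩ := Finset.mem_erase.1 hj
    exact Set.disjoint_left.1 (hV hj hi hji) hej he
  rw [← Finset.mul_prod_erase s P hi, pderiv_mul, herase, mul_zero, add_zero]

lemma coeff_zero_prod_of_isHomogeneous_one (hP : ∀ i ∈ s, (P i).IsHomogeneous 1) :
    coeff 0 (∏ i ∈ s, P i) = if s = ∅ then 1 else 0 := by
  rcases s.eq_empty_or_nonempty with rfl | ⟨i, hi⟩
  · simp
  · have hconst : constantCoeff (P i) = 0 := by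
      by_contra h
      simpa using not_imp_comm.1 (hP i hi).coeff_eq_zero h
    rw [← constantCoeff_eq, map_prod, Finset.prod_eq_zero hi hconst,
      if_neg (Finset.ne_empty_of_mem hi)]

lemma coeff_prod_of_isHomogeneous_one [DecidableEq σ] [DecidableEq ι] {ℓ : ι → MvPolynomial σ A}
    {β : σ → Option ι} {ε : σ → A} (hℓ : ∀ i ∈ s, (ℓ i).IsHomogeneous 1)
    (hcoeff : ∀ i ∈ s, ∀ e, coeff (Finsupp.single e 1) (ℓ i) = if β e = some i then ε e else 0)
    (E : Multiset σ) :
    coeff (Multiset.toFinsupp E) (∏ i ∈ s, ℓ i) =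
      if E.map β = s.val.map some then (E.map ε).prod else 0 := by
  have hV (s : Finset ι) : (s : Set ι).PairwiseDisjoint fun i => {e | β e = some i} :=
    fun i _ j _ hij => Set.disjoint_left.2 fun e hi hj =>
      hij (Option.some_injective _ (hi.symm.trans hj))
  have hsupp (i : ι) (hi : i ∈ s) : ℓ i ∈ supported A {e | β e = some i} :=
    mem_supported_of_isHomogeneous_one (hℓ i hi) fun e he => by
      by_contra h
      exact he ((hcoeff i hi e).trans (if_neg h))
  induction E using Multiset.induction generalizing s with
  | empty =>
    rw [Multiset.toFinsupp_zero, coeff_zero_prod_of_isHomogeneous_one hℓ]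
    simp
  | cons e E ih =>
    rw [IsMultiaffine.coeff_cons (.prod (hV s) hsupp fun i hi =>
      isMultiaffine_of_isHomogeneous_one (hℓ i hi))]
    by_cases h : ∃ i ∈ s, β e = some i
    · obtain ⟨i, hi, he⟩ := h
      rw [pderiv_prod_of_pairwiseDisjoint (hV s) hsupp hi he,
        pderiv_of_isHomogeneous_one (hℓ i hi), hcoeff i hi, if_pos he, coeff_C_mul,
        ih (fun j hj => hℓ j (Finset.mem_of_mem_erase hj))
          (fun j hj => hcoeff j (Finset.mem_of_mem_erase hj))
          (fun j hj => hsupp j (Finset.mem_of_mem_erase hj)),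
        ← Multiset.cons_erase (show i ∈ s.val from hi), ← Finset.erase_val, Multiset.map_cons,
        Multiset.map_cons, Multiset.map_cons, Multiset.prod_cons, he, mul_ite, mul_zero]
      simp only [Multiset.cons_inj_right]
    · rw [pderiv_eq_zero_of_mem_supported (prod_mem_supported hsupp) (by simpa using h), coeff_zero,
        if_neg]
      intro hE
      have hmem : β e ∈ s.val.map some :=
        hE ▸ Multiset.mem_map_of_mem β (Multiset.mem_cons_self e E)
      obtain ⟨i, hi, hie⟩ := Multiset.mem_map.1 hmem
      exact h ⟨i, hi, hie.symm⟩

end Multiaffine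

namespace PTree

/-- The set of labels of the leaves of a tree. -/
def labels (t : PTree) : Finset ℕ := t.leaves.toFinset

lemma mem_labels {t : PTree} {a : ℕ} : a ∈ t.labels ↔ a ∈ t.leaves := List.mem_toFinset

lemma labels_leaf (a : ℕ) : (leaf a).labels = {a} := by simp [labels, leaves]

lemma labels_node (l r : PTree) : (node l r).labels = l.labels ∪ r.labels :=
  List.toFinset_append

lemma labels_nonempty (t : PTree) : t.labels.Nonempty := by
  induction t with
  | leaf a => exact ⟨a, by simp [labels_leaf]⟩
  | node l r hl _ => exact hl.mono (by simp [labels_node])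

lemma nodup_leaves_node {l r : PTree} : (node l r).leaves.Nodup ↔
    l.leaves.Nodup ∧ r.leaves.Nodup ∧ Disjoint l.labels r.labels := by
  simp only [leaves, List.nodup_append', labels, List.disjoint_toFinset_iff_disjoint]

lemma mem_nodesList_node {l r v : PTree} :
    v ∈ (node l r).nodesList ↔ v ∈ l.nodesList ∨ v = node l r ∨ v ∈ r.nodesList := by
  simp [nodesList]

lemma labels_subset_of_mem_nodesList {t v : PTree} (hv : v ∈ t.nodesList) :
    v.labels ⊆ t.labels := by
  induction t with
  | leaf a => simp [nodesList] at hv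
  | node l r hl hr =>
    rw [labels_node]
    rcases mem_nodesList_node.1 hv with h | rfl | h
    · exact (hl h).trans Finset.subset_union_left
    · exact (labels_node l r).subset
    · exact (hr h).trans Finset.subset_union_right

lemma nodup_nodesList {t : PTree} (ht : t.leaves.Nodup) : t.nodesList.Nodup := by
  induction t with
  | leaf a => simp [nodesList]
  | node l r hl hr =>
    obtain ⟨hl', hr', hlr⟩ := nodup_leaves_node.1 ht
    have hdisj {v : PTree} (h : v.labels ⊆ l.labels) (h' : v.labels ⊆ r.labels) : False := by
      obtain ⟨a, ha⟩ := v.labels_nonempty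
      exact Finset.disjoint_left.1 hlr (h ha) (h' ha)
    have hl_notMem : node l r ∉ l.nodesList := fun h =>
      hdisj (v := r) (((labels_node l r).symm.subset.trans' Finset.subset_union_right).trans
        (labels_subset_of_mem_nodesList h)) subset_rfl
    have hr_notMem : node l r ∉ r.nodesList := fun h =>
      hdisj (v := l) subset_rfl (((labels_node l r).symm.subset.trans'
        Finset.subset_union_left).trans (labels_subset_of_mem_nodesList h))
    refine List.nodup_append'.2 ⟨hl hl', List.nodup_cons.2 ⟨hr_notMem, hr hr'⟩, ?_⟩
    intro v hvl hvr
    rcases List.mem_cons.1 hvr with rfl | hvr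
    · exact hl_notMem hvl
    · exact hdisj (labels_subset_of_mem_nodesList hvl) (labels_subset_of_mem_nodesList hvr)

end PTree

section TreePolynomial

open MvPolynomial

/-- The linear form of a planar vertex whose left and right branches carry the labels `A` and `B`:
the edges crossing the vertex from right to left, minus those crossing it from left to right. -/
def splitForm (A B : Finset ℕ) : MvPolynomial (ℕ × ℕ) ℤ :=
  ∑ e ∈ B ×ˢ A, X e - ∑ e ∈ A ×ˢ B, X e

lemma coeff_splitForm (A B : Finset ℕ) (e : ℕ × ℕ) :
    coeff (Finsupp.single e 1) (splitForm A B) =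
      (if e ∈ B ×ˢ A then 1 else 0) - (if e ∈ A ×ˢ B then 1 else 0) := by
  simp [splitForm, coeff_sum, coeff_X, Finsupp.single_left_inj, Finset.sum_ite_eq']

lemma coeff_splitForm_swap (A B : Finset ℕ) (i j : ℕ) :
    coeff (Finsupp.single (i, j) 1) (splitForm A B) =
      -coeff (Finsupp.single (j, i) 1) (splitForm A B) := by
  simp [coeff_splitForm, and_comm]

lemma isHomogeneous_splitForm (A B : Finset ℕ) : (splitForm A B).IsHomogeneous 1 :=
  (IsHomogeneous.sum _ _ _ fun _ _ => isHomogeneous_X _ _).sub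
    (IsHomogeneous.sum _ _ _ fun _ _ => isHomogeneous_X _ _)

lemma pderiv_splitForm (A B : Finset ℕ) (e : ℕ × ℕ) :
    pderiv e (splitForm A B) = C (coeff (Finsupp.single e 1) (splitForm A B)) :=
  pderiv_of_isHomogeneous_one (isHomogeneous_splitForm A B) e

lemma splitForm_swap (A B : Finset ℕ) : splitForm B A = -splitForm A B := (neg_sub _ _).symm

lemma splitForm_union_left {A A' : Finset ℕ} (h : Disjoint A A') (B : Finset ℕ) :
    splitForm (A ∪ A') B = splitForm A B + splitForm A' B := by
  simp only [splitForm, Finset.union_product, Finset.product_union,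
    Finset.sum_union (Finset.disjoint_product.2 (.inl h)),
    Finset.sum_union (Finset.disjoint_product.2 (.inr h))]
  ring

/-- The linear form of an internal vertex, given as the subtree it supports. -/
def nodeForm : PTree → MvPolynomial (ℕ × ℕ) ℤ
  | .leaf _ => 0
  | .node l r => splitForm l.labels r.labels

/-- The product of the linear forms of the internal vertices of a tree; its coefficients are the
configuration pairings with that tree, see `coeff_treePoly`. -/
def treePoly : PTree → MvPolynomial (ℕ × ℕ) ℤ
  | .leaf _ => 1
  | .node l r => treePoly l * treePoly r * splitForm l.labels r.labels

/-- The sign `-1` of an edge traversing its nadir from left to right, `1` otherwise. -/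
def edgeSign (t : PTree) (e : ℕ × ℕ) : ℤ :=
  if (t.nadir e.1 e.2).map Prod.snd = some true then -1 else 1

lemma isHomogeneous_nodeForm (v : PTree) : (nodeForm v).IsHomogeneous 1 := by
  cases v with
  | leaf a => exact isHomogeneous_zero _ _ _
  | node l r => exact isHomogeneous_splitForm _ _

lemma treePoly_eq_prod {t : PTree} (ht : t.leaves.Nodup) :
    treePoly t = ∏ v ∈ t.nodesList.toFinset, nodeForm v := by
  rw [List.prod_toFinset _ (PTree.nodup_nodesList ht)]
  clear ht
  induction t with
  | leaf a => simp [treePoly, PTree.nodesList]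
  | node l r hl hr =>
    rw [treePoly, hl, hr]
    simp only [PTree.nodesList, List.map_append, List.map_cons, List.prod_append, List.prod_cons,
      nodeForm]
    ring

lemma isHomogeneous_treePoly (t : PTree) : (treePoly t).IsHomogeneous t.nodesList.length := by
  induction t with
  | leaf _ => exact isHomogeneous_one _ _
  | node l r hl hr =>
    rw [PTree.nodesList, List.length_append, List.length_cons, ← add_assoc]
    exact (hl.mul hr).mul (isHomogeneous_splitForm l.labels r.labels)

lemma coeff_nodeForm_of_nadir_eq {t v : PTree} (ht : t.leaves.Nodup) {i j : ℕ} {b : Bool}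
    (h : t.nadir i j = some (v, b)) :
    coeff (Finsupp.single (i, j) 1) (nodeForm v) = if b then -1 else 1 := by
  induction t with
  | leaf a => simp [PTree.nadir] at h
  | node l r hl hr =>
    obtain ⟨hl', hr', hlr⟩ := PTree.nodup_leaves_node.1 ht
    have hdisj (a : ℕ) (ha : a ∈ l.leaves) : a ∉ r.leaves := fun hr =>
      Finset.disjoint_left.1 hlr (PTree.mem_labels.2 ha) (PTree.mem_labels.2 hr)
    simp only [PTree.nadir] at h
    split_ifs at h with hij hji
    · simp only [Option.some.injEq, Prod.mk.injEq] at h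
      simp [← h.1, ← h.2, nodeForm, coeff_splitForm, PTree.mem_labels, hij, hdisj i hij.1]
    · simp only [Option.some.injEq, Prod.mk.injEq] at h
      simp [← h.1, ← h.2, nodeForm, coeff_splitForm, PTree.mem_labels, hji, hdisj j hji.1]
    · exact hl hl' h
    · exact hr hr' h

lemma mem_labels_of_coeff_nodeForm_ne_zero {v : PTree} {i j : ℕ}
    (h : coeff (Finsupp.single (i, j) 1) (nodeForm v) ≠ 0) : i ∈ v.labels ∧ j ∈ v.labels := by
  cases v with
  | leaf a => simp [nodeForm] at h
  | node l r =>
    rw [nodeForm, coeff_splitForm] at h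
    simp only [Finset.mem_product, PTree.labels_node, Finset.mem_union] at h ⊢
    grind

lemma nadirFst_of_coeff_nodeForm_ne_zero {t v : PTree} (ht : t.leaves.Nodup)
    (hv : v ∈ t.nodesList) {i j : ℕ} (h : coeff (Finsupp.single (i, j) 1) (nodeForm v) ≠ 0) :
    nadirFst t (i, j) = some v := by
  induction t with
  | leaf a => simp [PTree.nodesList] at hv
  | node l r hl hr =>
    obtain ⟨hl', hr', hlr⟩ := PTree.nodup_leaves_node.1 ht
    obtain ⟨hi, hj⟩ := mem_labels_of_coeff_nodeForm_ne_zero h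
    have hdisj (a : ℕ) (ha : a ∈ l.leaves) : a ∉ r.leaves := fun hr =>
      Finset.disjoint_left.1 hlr (PTree.mem_labels.2 ha) (PTree.mem_labels.2 hr)
    rcases PTree.mem_nodesList_node.1 hv with hv | rfl | hv
    · have hi := PTree.mem_labels.1 (PTree.labels_subset_of_mem_nodesList hv hi)
      have hj := PTree.mem_labels.1 (PTree.labels_subset_of_mem_nodesList hv hj)
      simpa [nadirFst, PTree.nadir, hi, hj, hdisj _ hi, hdisj _ hj] using hl hl' hv
    · rw [nodeForm, coeff_splitForm] at h
      simp only [Finset.mem_product, PTree.mem_labels] at h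
      simp only [nadirFst, PTree.nadir]
      grind
    · have hi := PTree.mem_labels.1 (PTree.labels_subset_of_mem_nodesList hv hi)
      have hj := PTree.mem_labels.1 (PTree.labels_subset_of_mem_nodesList hv hj)
      have hi' : i ∉ l.leaves := fun h => hdisj i h hi
      have hj' : j ∉ l.leaves := fun h => hdisj j h hj
      simpa [nadirFst, PTree.nadir, hi, hj, hi', hj'] using hr hr' hv

lemma coeff_nodeForm {t v : PTree} (ht : t.leaves.Nodup) (hv : v ∈ t.nodesList) (e : ℕ × ℕ) :
    coeff (Finsupp.single e 1) (nodeForm v) =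
      if nadirFst t e = some v then edgeSign t e else 0 := by
  split_ifs with h
  · obtain ⟨⟨w, b⟩, hwb, rfl⟩ := Option.map_eq_some_iff.1 h
    rw [edgeSign, hwb]
    simpa using coeff_nodeForm_of_nadir_eq ht hwb
  · by_contra hne
    exact h (nadirFst_of_coeff_nodeForm_ne_zero ht hv hne)

lemma prod_map_edgeSign (t : PTree) (E : Multiset (ℕ × ℕ)) : (E.map (edgeSign t)).prod =
    (-1) ^ Multiset.card (E.filter fun e => (t.nadir e.1 e.2).map Prod.snd = some true) := by
  induction E using Multiset.induction with
  | empty => simp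
  | cons e E ih =>
    rw [Multiset.map_cons, Multiset.prod_cons, ih, Multiset.filter_cons, edgeSign]
    split_ifs <;> simp [pow_add]

lemma coeff_treePoly {t : PTree} (ht : t.leaves.Nodup) (E : Multiset (ℕ × ℕ)) :
    coeff (Multiset.toFinsupp E) (treePoly t) = pairPT E t := by
  rw [treePoly_eq_prod ht, coeff_prod_of_isHomogeneous_one (β := nadirFst t) (ε := edgeSign t)
      (fun v _ => isHomogeneous_nodeForm v)
      (fun v hv => coeff_nodeForm ht (List.mem_toFinset.1 hv)), prod_map_edgeSign, pairPT,
    List.toFinset_val, (PTree.nodup_nodesList ht).dedup, Multiset.map_coe]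

lemma connOn_union {A B : Finset ℕ} {E : Multiset (ℕ × ℕ)} (hA : ConnOn A E) (hB : ConnOn B E)
    {x y : ℕ} (hx : x ∈ A) (hy : y ∈ B) (hxy : Adj E x y) : ConnOn (A ∪ B) E := by
  have : Std.Symm (Adj E) := ⟨fun _ _ => Or.symm⟩
  have hcross (a : ℕ) (ha : a ∈ A) (b : ℕ) (hb : b ∈ B) : Relation.ReflTransGen (Adj E) a b :=
    ((hA a ha x hx).tail hxy).trans (hB y hy b hb)
  intro a ha b hb
  rcases Finset.mem_union.1 ha with ha | ha <;> rcases Finset.mem_union.1 hb with hb | hb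
  · exact hA a ha b hb
  · exact hcross a ha b hb
  · exact symm (hcross b hb a ha)
  · exact hB a ha b hb

lemma connOn_labels_of_forall_nodeForm {t : PTree} {E : Multiset (ℕ × ℕ)}
    (h : ∀ v ∈ t.nodesList, ∃ e ∈ E, coeff (Finsupp.single e 1) (nodeForm v) ≠ 0) :
    ConnOn t.labels E := by
  induction t with
  | leaf x =>
    simp only [ConnOn, PTree.labels_leaf, Finset.mem_singleton]
    rintro a rfl b rfl
    exact .refl
  | node l r hl hr =>
    have hl := hl fun v hv => h v (PTree.mem_nodesList_node.2 (.inl hv))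
    have hr := hr fun v hv => h v (PTree.mem_nodesList_node.2 (.inr (.inr hv)))
    obtain ⟨⟨i, j⟩, he, hne⟩ := h _ (PTree.mem_nodesList_node.2 (.inr (.inl rfl)))
    rw [PTree.labels_node]
    rw [nodeForm, coeff_splitForm] at hne
    simp only [Finset.mem_product] at hne
    by_cases hij : i ∈ l.labels ∧ j ∈ r.labels
    · exact connOn_union hl hr hij.1 hij.2 (.inl he)
    · have hji : i ∈ r.labels ∧ j ∈ l.labels := by grind
      exact connOn_union hl hr hji.2 hji.1 (.inr he)

lemma connOn_of_pairPT_ne_zero {t : PTree} (ht : t.leaves.Nodup) {E : Multiset (ℕ × ℕ)}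
    (h : pairPT E t ≠ 0) : ConnOn t.labels E := by
  have hE : E.map (nadirFst t) = (t.nodesList.map some : List (Option PTree)) := by
    by_contra hE
    exact h (if_neg hE)
  refine connOn_labels_of_forall_nodeForm fun v hv => ?_
  have hmem : some v ∈ E.map (nadirFst t) := by simpa [hE] using hv
  obtain ⟨e, he, hev⟩ := Multiset.mem_map.1 hmem
  refine ⟨e, he, ?_⟩
  rw [coeff_nodeForm ht hv, if_pos hev, edgeSign]
  split_ifs <;> simp

end TreePolynomial

section Arnold

open MvPolynomial

/-- A multiaffine polynomial whose variables are the oriented edges between vertices of `S`, and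
whose coefficients, seen as a functional on Diagrams, kill the symmetry and Arnold combinations.
The relations are stated for partial derivatives since adding an edge to a Diagram amounts to
differentiating the polynomial. -/
structure IsArnold {V A : Type*} [CommRing A] (S : Set V) (P : MvPolynomial (V × V) A) : Prop where
  mem_supported : P ∈ supported A (S ×ˢ S)
  isMultiaffine : IsMultiaffine P
  symm (i j : V) : pderiv (i, j) P = -pderiv (j, i) P
  arnold {i j k : V} (hij : i ≠ j) (hjk : j ≠ k) (hik : i ≠ k) :
    pderiv (i, j) (pderiv (j, k) P) + pderiv (j, k) (pderiv (k, i) P) +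
      pderiv (k, i) (pderiv (i, j) P) = 0

namespace IsArnold

variable {V A : Type*} [CommRing A] {S S' : Set V} {P Q : MvPolynomial (V × V) A}

lemma pderiv_eq_zero (hP : IsArnold S P) {i j : V} (h : ¬(i ∈ S ∧ j ∈ S)) :
    pderiv (i, j) P = 0 :=
  pderiv_eq_zero_of_mem_supported hP.mem_supported h

protected lemma one (S : Set V) : IsArnold S (1 : MvPolynomial (V × V) A) where
  mem_supported := one_mem _
  isMultiaffine := isMultiaffine_one
  symm i j := by simp
  arnold _ _ _ := by simp

protected lemma mul (hS : Disjoint S S') (hP : IsArnold S P) (hQ : IsArnold S' Q) :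
    IsArnold (S ∪ S') (P * Q) where
  mem_supported := mul_mem
    (supported_mono (Set.prod_mono Set.subset_union_left Set.subset_union_left) hP.mem_supported)
    (supported_mono (Set.prod_mono Set.subset_union_right Set.subset_union_right) hQ.mem_supported)
  isMultiaffine := hP.isMultiaffine.mul (Set.disjoint_prod.2 (.inl hS)) hP.mem_supported
    hQ.mem_supported hQ.isMultiaffine
  symm i j := by
    rw [pderiv_mul, pderiv_mul, hP.symm i j, hQ.symm i j]
    ring
  arnold {i j k} hij hjk hik := by
    have hleft (a b c : V) : pderiv (a, b) P * pderiv (b, c) Q = 0 := by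
      by_cases hb : b ∈ S
      · rw [hQ.pderiv_eq_zero fun h => Set.disjoint_left.1 hS hb h.1, mul_zero]
      · rw [hP.pderiv_eq_zero fun h => hb h.2, zero_mul]
    have hright (a b c : V) : pderiv (b, c) P * pderiv (a, b) Q = 0 := by
      by_cases hb : b ∈ S
      · rw [hQ.pderiv_eq_zero fun h => Set.disjoint_left.1 hS hb h.2, mul_zero]
      · rw [hP.pderiv_eq_zero fun h => hb h.1, zero_mul]
    simp only [pderiv_mul, map_add]
    linear_combination P * hQ.arnold hij hjk hik + Q * hP.arnold hij hjk hik + hleft i j k +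
      hleft j k i + hleft k i j + hright i j k + hright j k i + hright k i j

protected lemma prod {ι : Type*} {s : Finset ι} {S : ι → Set V} {P : ι → MvPolynomial (V × V) A}
    (hS : (s : Set ι).PairwiseDisjoint S) (hP : ∀ i ∈ s, IsArnold (S i) (P i)) :
    IsArnold (⋃ i ∈ s, S i) (∏ i ∈ s, P i) := by
  induction s using Finset.induction with
  | empty => simpa using IsArnold.one _
  | insert i s hi ih =>
    rw [Finset.coe_insert, Set.pairwiseDisjoint_insert_of_notMem (by simpa using hi)] at hS
    simp only [Finset.mem_coe] at hS
    rw [Finset.forall_mem_insert] at hP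
    rw [Finset.prod_insert hi, Finset.set_biUnion_insert]
    exact .mul (Set.disjoint_iUnion₂_right.2 hS.2) hP.1 (ih hS.1 hP.2)

variable [DecidableEq V] (E : Multiset (V × V))

lemma coeff_symm (hP : IsArnold S P) (i j : V) :
    coeff (Multiset.toFinsupp ((i, j) ::ₘ E)) P + coeff (Multiset.toFinsupp ((j, i) ::ₘ E)) P =
      0 := by
  rw [hP.isMultiaffine.coeff_cons, hP.isMultiaffine.coeff_cons, hP.symm, coeff_neg,
    neg_add_cancel]

lemma coeff_cons_cons (hP : IsArnold S P) (e e' : V × V) :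
    coeff (Multiset.toFinsupp (e ::ₘ e' ::ₘ E)) P =
      coeff (Multiset.toFinsupp E) (pderiv e (pderiv e' P)) := by
  rw [hP.isMultiaffine.coeff_cons, (hP.isMultiaffine.pderiv e).coeff_cons, pderiv_pderiv_comm]

lemma coeff_arnold (hP : IsArnold S P) {i j k : V} (hij : i ≠ j) (hjk : j ≠ k) (hik : i ≠ k) :
    coeff (Multiset.toFinsupp ((i, j) ::ₘ (j, k) ::ₘ E)) P +
      coeff (Multiset.toFinsupp ((j, k) ::ₘ (k, i) ::ₘ E)) P +
      coeff (Multiset.toFinsupp ((k, i) ::ₘ (i, j) ::ₘ E)) P = 0 := by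
  simp only [hP.coeff_cons_cons, ← coeff_add, hP.arnold hij hjk hik, coeff_zero]

lemma coeff_doubled (hP : IsArnold S P) (e : V × V) :
    coeff (Multiset.toFinsupp (e ::ₘ e ::ₘ E)) P = 0 := by
  rw [hP.coeff_cons_cons, hP.isMultiaffine.pderiv_pderiv_self, coeff_zero]

lemma coeff_doubled_swap (hP : IsArnold S P) (i j : V) :
    coeff (Multiset.toFinsupp ((i, j) ::ₘ (j, i) ::ₘ E)) P = 0 := by
  rw [hP.coeff_cons_cons, hP.symm j i, map_neg, hP.isMultiaffine.pderiv_pderiv_self, neg_zero,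
    coeff_zero]

end IsArnold

lemma splitForm_mem_supported (A B : Finset ℕ) :
    splitForm A B ∈ supported ℤ ((A : Set ℕ) ×ˢ (B : Set ℕ) ∪ (B : Set ℕ) ×ˢ (A : Set ℕ)) :=
  mem_supported_of_isHomogeneous_one (isHomogeneous_splitForm A B) fun e he => by
    by_contra h
    simp only [coeff_splitForm, Finset.mem_product] at he
    simp only [Set.mem_union, Set.mem_prod, Finset.mem_coe] at h
    grind

lemma isMultiaffine_mul_splitForm {A B : Finset ℕ} (hAB : Disjoint A B)
    {P Q : MvPolynomial (ℕ × ℕ) ℤ} (hP : IsArnold (A : Set ℕ) P) (hQ : IsArnold (B : Set ℕ) Q) :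
    IsMultiaffine (P * Q * splitForm A B) := by
  have hAB := Finset.disjoint_coe.2 hAB
  refine IsMultiaffine.mul ?_ (mul_mem
    (supported_mono Set.subset_union_left hP.mem_supported)
    (supported_mono Set.subset_union_right hQ.mem_supported)) (splitForm_mem_supported A B)
    (hP.mul hAB hQ).isMultiaffine (isMultiaffine_of_isHomogeneous_one (isHomogeneous_splitForm A B))
  simp only [Set.disjoint_union_left, Set.disjoint_union_right, Set.disjoint_prod, hAB, hAB.symm,
    true_or, or_true, and_self]

lemma IsArnold.mul_splitForm {A B : Finset ℕ} (hAB : Disjoint A B) {P Q : MvPolynomial (ℕ × ℕ) ℤ}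
    (hP : IsArnold (A : Set ℕ) P) (hQ : IsArnold (B : Set ℕ) Q) :
    IsArnold ((A : Set ℕ) ∪ B) (P * Q * splitForm A B) := by
  have hPQ := hP.mul (Finset.disjoint_coe.2 hAB) hQ
  have hmultiaffine := isMultiaffine_mul_splitForm hAB hP hQ
  set c : ℕ × ℕ → ℤ := fun e => coeff (Finsupp.single e 1) (splitForm A B) with hc
  have hswap (i j : ℕ) : c (i, j) = -c (j, i) := coeff_splitForm_swap A B i j
  have hcancel (i j k : ℕ) : pderiv (i, j) (P * Q) * (C (c (j, k)) + C (c (k, i))) = 0 := by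
    by_cases hij : (i ∈ A ∧ j ∈ A) ∨ (i ∈ B ∧ j ∈ B)
    · have : c (j, k) + c (k, i) = 0 := by
        rw [hswap k i]
        simp only [hc, coeff_splitForm, Finset.mem_product]
        have := Finset.disjoint_left.1 hAB
        grind
      rw [← C_add, this, C_0, mul_zero]
    · rw [not_or] at hij
      rw [pderiv_mul, hP.pderiv_eq_zero (by simpa using hij.1),
        hQ.pderiv_eq_zero (by simpa using hij.2), zero_mul, mul_zero, add_zero, zero_mul]
  generalize P * Q = W at hPQ hmultiaffine hcancel ⊢
  refine ⟨mul_mem hPQ.mem_supported (supported_mono ?_ (splitForm_mem_supported A B)),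
    hmultiaffine, fun i j => ?_, fun {i j k} hij hjk hik => ?_⟩
  · exact Set.union_subset (Set.prod_mono Set.subset_union_left Set.subset_union_right)
      (Set.prod_mono Set.subset_union_right Set.subset_union_left)
  · simp only [pderiv_mul, pderiv_splitForm]
    rw [hPQ.symm i j, show coeff _ _ = _ from hswap i j, C_neg]
    ring
  · simp only [pderiv_mul, pderiv_splitForm, map_add, pderiv_C]
    linear_combination splitForm A B * hPQ.arnold hij hjk hik + hcancel i j k + hcancel j k i +
      hcancel k i j

lemma isArnold_treePoly {t : PTree} (ht : t.leaves.Nodup) :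
    IsArnold (t.labels : Set ℕ) (treePoly t) := by
  induction t with
  | leaf a => exact .one _
  | node l r hl hr =>
    obtain ⟨hl', hr', hlr⟩ := PTree.nodup_leaves_node.1 ht
    rw [PTree.labels_node, Finset.coe_union]
    exact (hl hl').mul_splitForm hlr (hr hr')

/-- A Forest with set of leaf labels `S`. -/
structure IsForestWith (S : Finset ℕ) (F : Finset PTree) : Prop where
  nodup : ∀ t ∈ F, t.leaves.Nodup
  pairwiseDisjoint : (F : Set PTree).PairwiseDisjoint PTree.labels
  biUnion_labels : F.biUnion PTree.labels = S

lemma isForestOn_iff_isForestWith {n : ℕ} {F : Finset PTree} :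
    IsForestOn n F ↔ IsForestWith (Finset.range n) F := by
  have hdisj : (∀ t ∈ F, ∀ s ∈ F, t ≠ s → ∀ a ∈ t.leaves, a ∉ s.leaves) ↔
      (F : Set PTree).PairwiseDisjoint PTree.labels := by
    simp only [Set.PairwiseDisjoint, Set.Pairwise, Function.onFun, Finset.disjoint_left,
      PTree.mem_labels, Finset.mem_coe]
  have hunion : ((∀ t ∈ F, ∀ a ∈ t.leaves, a < n) ∧ ∀ a, a < n → ∃ t ∈ F, a ∈ t.leaves) ↔
      F.biUnion PTree.labels = Finset.range n := by
    simp only [Finset.ext_iff, Finset.mem_biUnion, PTree.mem_labels, Finset.mem_range]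
    grind
  rw [IsForestOn, hdisj, hunion]
  exact ⟨fun ⟨h₁, h₂, h₃⟩ => ⟨h₁, h₂, h₃⟩, fun ⟨h₁, h₂, h₃⟩ => ⟨h₁, h₂, h₃⟩⟩

/-- The generating polynomial of the configuration pairings with a Forest,
see `pairDF_eq_coeff_forestPoly`. -/
def forestPoly (F : Finset PTree) : MvPolynomial (ℕ × ℕ) ℤ := ∏ t ∈ F, treePoly t

lemma forestPoly_insert {t : PTree} {F : Finset PTree} (ht : t ∉ F) :
    forestPoly (insert t F) = treePoly t * forestPoly F :=
  Finset.prod_insert ht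

lemma isHomogeneous_forestPoly (F : Finset PTree) :
    (forestPoly F).IsHomogeneous (forestDeg F) :=
  .prod _ _ _ fun t _ => isHomogeneous_treePoly t

variable {S : Finset ℕ} {F : Finset PTree}

lemma isArnold_forestPoly (hF : IsForestWith S F) : IsArnold (S : Set ℕ) (forestPoly F) := by
  rw [← hF.biUnion_labels, Finset.coe_biUnion]
  exact .prod (fun t ht s hs hts => Finset.disjoint_coe.2 (hF.pairwiseDisjoint ht hs hts))
    fun t ht => isArnold_treePoly (hF.nodup t ht)

lemma pairDF_eq_coeff_forestPoly (hF : IsForestWith S F) (E : Multiset (ℕ × ℕ)) :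
    pairDF E F = coeff (Multiset.toFinsupp E) (forestPoly F) := by
  have hdisj : (F : Set PTree).PairwiseDisjoint
      fun t => (t.labels : Set ℕ) ×ˢ (t.labels : Set ℕ) :=
    fun t ht s hs hts => Set.disjoint_prod.2
      (.inl (Finset.disjoint_coe.2 (hF.pairwiseDisjoint ht hs hts)))
  have hfilter (t : PTree) :
      E.filter (· ∈ (t.labels : Set ℕ) ×ˢ (t.labels : Set ℕ)) = edgesIn E t :=
    Multiset.filter_congr fun e _ => by simp [PTree.mem_labels]
  rw [forestPoly, coeff_prod_of_pairwiseDisjoint hdisj fun t ht =>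
    (isArnold_treePoly (hF.nodup t ht)).mem_supported]
  simp only [hfilter]
  simp only [Set.mem_prod, Finset.mem_coe, PTree.mem_labels]
  rw [Finset.prod_congr rfl fun t ht => coeff_treePoly (hF.nodup t ht) (edgesIn E t), pairDF,
    sameRho]
  by_cases hE : ∀ e ∈ E, ∃ t ∈ F, e.1 ∈ t.leaves ∧ e.2 ∈ t.leaves
  · simp only [if_pos hE]
    split_ifs with hconn
    · rfl
    · have ⟨t, ht, hnot⟩ : ∃ t ∈ F, ¬ConnOn t.labels (edgesIn E t) := by
        by_contra! h
        exact hconn ⟨hE, h⟩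
      refine (Finset.prod_eq_zero ht ?_).symm
      exact not_imp_comm.1 (connOn_of_pairPT_ne_zero (hF.nodup t ht)) hnot
  · rw [if_neg hE, if_neg fun h => hE h.1]

lemma card_eq_forestDeg_of_pairDF_ne_zero (hF : IsForestWith S F) {E : Multiset (ℕ × ℕ)}
    (h : pairDF E F ≠ 0) : Multiset.card E = forestDeg F := by
  rw [pairDF_eq_coeff_forestPoly hF] at h
  rw [← Multiset.toFinsupp_sum_eq]
  exact not_imp_comm.1 (isHomogeneous_forestPoly F).coeff_eq_zero h

end Arnold

/-- One-hole contexts of planar trees, used to single out the place where a Jacobi or symmetry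
combination happens. -/
inductive Ctx : Type
  | hole : Ctx
  | left (c : Ctx) (r : PTree) : Ctx
  | right (l : PTree) (c : Ctx) : Ctx

namespace Ctx

/-- The tree obtained by putting `s` into the hole. -/
def fill : Ctx → PTree → PTree
  | hole, s => s
  | left c r, s => .node (c.fill s) r
  | right l c, s => .node l (c.fill s)

/-- The labels of the leaves outside of the hole, not necessarily in planar order. -/
def leaves : Ctx → List ℕ
  | hole => []
  | left c r => c.leaves ++ r.leaves
  | right l c => l.leaves ++ c.leaves

/-- The set of labels of the leaves outside of the hole. -/
def labels (c : Ctx) : Finset ℕ := c.leaves.toFinset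

/-- Composition of contexts: the hole of `c` is filled by the context `d`. -/
def comp : Ctx → Ctx → Ctx
  | hole, d => d
  | left c r, d => left (c.comp d) r
  | right l c, d => right l (c.comp d)

/-- Apply a map of trees to all the subtrees hanging off the path from the root to the hole. -/
def map (f : PTree → PTree) : Ctx → Ctx
  | hole => hole
  | left c r => left (c.map f) (f r)
  | right l c => right (f l) (c.map f)

lemma fill_comp (c d : Ctx) (s : PTree) : (c.comp d).fill s = c.fill (d.fill s) := by
  induction c with
  | hole => rfl
  | left c r ih => rw [comp, fill, fill, ih]
  | right l c ih => rw [comp, fill, fill, ih]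

lemma leaves_fill_perm (c : Ctx) (s : PTree) : (c.fill s).leaves.Perm (s.leaves ++ c.leaves) := by
  induction c with
  | hole => simp [fill, leaves]
  | left c r ih =>
    rw [fill, leaves, PTree.leaves, ← List.append_assoc]
    exact ih.append_right _
  | right l c ih =>
    rw [fill, leaves, PTree.leaves]
    exact (ih.append_left _).trans (List.perm_append_comm_assoc _ _ _)

lemma nodup_leaves_fill {c : Ctx} {s : PTree} : (c.fill s).leaves.Nodup ↔
    s.leaves.Nodup ∧ c.leaves.Nodup ∧ Disjoint s.labels c.labels := by
  rw [(c.leaves_fill_perm s).nodup_iff, List.nodup_append', PTree.labels, labels,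
    List.disjoint_toFinset_iff_disjoint]

lemma labels_fill (c : Ctx) (s : PTree) : (c.fill s).labels = s.labels ∪ c.labels := by
  rw [PTree.labels, List.toFinset_eq_of_perm _ _ (c.leaves_fill_perm s), List.toFinset_append]
  rfl

lemma labels_left (c : Ctx) (r : PTree) : (left c r).labels = c.labels ∪ r.labels :=
  List.toFinset_append

lemma labels_right (l : PTree) (c : Ctx) : (right l c).labels = l.labels ∪ c.labels :=
  List.toFinset_append

end Ctx

namespace PTree

lemma graft_of_notMem {t : PTree} {m : ℕ} (h : m ∉ t.labels) (s : PTree) : t.graft m s = t := by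
  induction t with
  | leaf a => exact if_neg fun ha => h (by simp [labels_leaf, ha])
  | node l r hl hr =>
    rw [labels_node, Finset.notMem_union] at h
    rw [graft, hl h.1, hr h.2]

lemma graft_leaf_self (t : PTree) (m : ℕ) : t.graft m (leaf m) = t := by
  induction t with
  | leaf a =>
    rw [graft]
    split_ifs with h
    · rw [h]
    · rfl
  | node l r hl hr => rw [graft, hl, hr]

lemma graft_fill (c : Ctx) (u : PTree) (m : ℕ) (s : PTree) :
    (c.fill u).graft m s = (c.map (graft · m s)).fill (u.graft m s) := by
  induction c with
  | hole => rfl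
  | left c r ih => rw [Ctx.fill, graft, ih]; rfl
  | right l c ih => rw [Ctx.fill, graft, ih]; rfl

lemma graft_fill_leaf {c : Ctx} {m : ℕ} (hm : m ∉ c.labels) (s : PTree) :
    (c.fill (leaf m)).graft m s = c.fill s := by
  induction c with
  | hole => exact if_pos rfl
  | left c r ih =>
    rw [Ctx.labels_left, Finset.notMem_union] at hm
    rw [Ctx.fill, graft, ih hm.1, graft_of_notMem hm.2]; rfl
  | right l c ih =>
    rw [Ctx.labels_right, Finset.notMem_union] at hm
    rw [Ctx.fill, graft, ih hm.2, graft_of_notMem hm.1]; rfl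

lemma exists_ctx_graft_eq_fill {t : PTree} (ht : t.leaves.Nodup) {m : ℕ} (hm : m ∈ t.labels) :
    ∃ c : Ctx, ∀ s, t.graft m s = c.fill s := by
  induction t with
  | leaf a =>
    rw [labels_leaf, Finset.mem_singleton] at hm
    exact ⟨.hole, fun s => if_pos hm.symm⟩
  | node l r hl hr =>
    obtain ⟨hl', hr', hlr⟩ := nodup_leaves_node.1 ht
    rw [labels_node, Finset.mem_union] at hm
    obtain hm | hm := hm
    · obtain ⟨c, hc⟩ := hl hl' hm
      refine ⟨.left c r, fun s => ?_⟩
      rw [graft, hc, graft_of_notMem (Finset.disjoint_left.1 hlr hm)]; rfl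
    · obtain ⟨c, hc⟩ := hr hr' hm
      refine ⟨.right l c, fun s => ?_⟩
      rw [graft, hc, graft_of_notMem (Finset.disjoint_right.1 hlr hm)]; rfl

lemma exists_graft_eq_fill {c : Ctx} {s : PTree} (h : (c.fill s).leaves.Nodup) :
    ∃ (t : PTree) (m : ℕ), t.leaves.Nodup ∧ m ∈ t.leaves ∧ ∀ s', t.graft m s' = c.fill s' := by
  obtain ⟨m, hm⟩ := s.labels_nonempty
  obtain ⟨-, hc, hsc⟩ := Ctx.nodup_leaves_fill.1 h
  have hmc : m ∉ c.labels := Finset.disjoint_left.1 hsc hm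
  refine ⟨c.fill (leaf m), m, Ctx.nodup_leaves_fill.2 ⟨List.nodup_singleton m, hc, ?_⟩, ?_,
    graft_fill_leaf hmc⟩
  · rwa [labels_leaf, Finset.disjoint_singleton_left]
  · rw [← mem_labels, Ctx.labels_fill, labels_leaf]
    exact Finset.mem_union_left _ (Finset.mem_singleton_self m)

lemma leaves_node_swap_perm (A B : PTree) : (node B A).leaves.Perm (node A B).leaves :=
  List.perm_append_comm

lemma leaves_node_rotate_perm (A B C : PTree) :
    (node (node B C) A).leaves.Perm (node (node A B) C).leaves := by
  simp only [leaves]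
  rw [List.append_assoc A.leaves]
  exact List.perm_append_comm

lemma labels_eq_of_perm {s t : PTree} (h : s.leaves.Perm t.leaves) : s.labels = t.labels :=
  List.toFinset_eq_of_perm _ _ h

end PTree

/-- The cofactor of `treePoly s` in `treePoly (c.fill s)`, which depends on `s` only through its
set of labels `S`. -/
def Ctx.poly : Ctx → Finset ℕ → MvPolynomial (ℕ × ℕ) ℤ
  | hole, _ => 1
  | left c r, S => c.poly S * treePoly r * splitForm (S ∪ c.labels) r.labels
  | right l c, S => treePoly l * c.poly S * splitForm l.labels (S ∪ c.labels)

lemma treePoly_fill (c : Ctx) (s : PTree) :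
    treePoly (c.fill s) = treePoly s * c.poly s.labels := by
  induction c with
  | hole => exact (mul_one _).symm
  | left c r ih => rw [Ctx.fill, treePoly, ih, Ctx.labels_fill, Ctx.poly]; ring
  | right l c ih => rw [Ctx.fill, treePoly, ih, Ctx.labels_fill, Ctx.poly]; ring

lemma treePoly_node_swap (A B : PTree) :
    treePoly (.node A B) + treePoly (.node B A) = 0 := by
  rw [treePoly, treePoly, splitForm_swap A.labels]
  ring

lemma treePoly_jacobi {A B C : PTree} (hAB : Disjoint A.labels B.labels)
    (hBC : Disjoint B.labels C.labels) (hCA : Disjoint C.labels A.labels) :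
    treePoly (.node (.node A B) C) + treePoly (.node (.node B C) A) +
      treePoly (.node (.node C A) B) = 0 := by
  simp only [treePoly, PTree.labels_node, splitForm_union_left, hAB, hBC, hCA]
  rw [splitForm_swap A.labels B.labels, splitForm_swap B.labels C.labels,
    splitForm_swap C.labels A.labels]
  ring

/-- The tree `t` can be added to `F` to form a Forest with set of leaf labels `S`. -/
structure IsForestInsert (S : Finset ℕ) (t : PTree) (F : Finset PTree) : Prop where
  nodup : t.leaves.Nodup
  labels_subset : t.labels ⊆ S
  rest : IsForestWith (S \ t.labels) F

section ForestInsert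

variable {S : Finset ℕ} {t : PTree} {F : Finset PTree}

lemma IsForestWith.labels_subset (h : IsForestWith S F) (ht : t ∈ F) : t.labels ⊆ S :=
  h.biUnion_labels ▸ Finset.subset_biUnion_of_mem _ ht

lemma IsForestInsert.disjoint (h : IsForestInsert S t F) {s : PTree} (hs : s ∈ F) :
    Disjoint t.labels s.labels :=
  Finset.disjoint_sdiff.mono_right (h.rest.labels_subset hs)

lemma IsForestInsert.notMem (h : IsForestInsert S t F) : t ∉ F := fun ht =>
  t.labels_nonempty.ne_empty (Finset.disjoint_self_iff_empty _ |>.1 (h.disjoint ht))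

lemma IsForestInsert.isForestWith (h : IsForestInsert S t F) : IsForestWith S (insert t F) where
  nodup := (Finset.forall_mem_insert _ _ _).2 ⟨h.nodup, h.rest.nodup⟩
  pairwiseDisjoint := by
    rw [Finset.coe_insert]
    exact h.rest.pairwiseDisjoint.insert fun s hs _ => h.disjoint hs
  biUnion_labels := by
    rw [Finset.biUnion_insert, h.rest.biUnion_labels, Finset.union_sdiff_of_subset h.labels_subset]

lemma IsForestWith.isForestInsert (ht : t ∉ F) (h : IsForestWith S (insert t F)) :
    IsForestInsert S t F where
  nodup := h.nodup t (Finset.mem_insert_self t F)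
  labels_subset := h.labels_subset (Finset.mem_insert_self t F)
  rest :=
    { nodup s hs := h.nodup s (Finset.mem_insert_of_mem hs)
      pairwiseDisjoint := h.pairwiseDisjoint.subset (Finset.coe_subset.2 (Finset.subset_insert t F))
      biUnion_labels := by
        have hdisj : Disjoint t.labels (F.biUnion PTree.labels) :=
          (Finset.disjoint_biUnion_right _ _ _).2 fun s hs =>
            h.pairwiseDisjoint (Finset.mem_insert_self t F) (Finset.mem_insert_of_mem hs)
              (ne_of_mem_of_not_mem hs ht).symm
        rw [← h.biUnion_labels, Finset.biUnion_insert, Finset.union_sdiff_cancel_left hdisj] }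

lemma IsForestWith.exists_isForestInsert (h : IsForestWith S F) {a : ℕ} (ha : a ∈ S) :
    ∃ t F₀, a ∈ t.labels ∧ F = insert t F₀ ∧ IsForestInsert S t F₀ := by
  rw [← h.biUnion_labels, Finset.mem_biUnion] at ha
  obtain ⟨t, ht, hat⟩ := ha
  refine ⟨t, F.erase t, hat, (Finset.insert_erase ht).symm, ?_⟩
  exact IsForestWith.isForestInsert (Finset.notMem_erase t F) (by rwa [Finset.insert_erase ht])

lemma IsForestInsert.fill_of_perm {c : Ctx} {s s' : PTree} (h : IsForestInsert S (c.fill s) F)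
    (hs : s'.leaves.Perm s.leaves) : IsForestInsert S (c.fill s') F := by
  have hlabels : (c.fill s').labels = (c.fill s).labels := by
    rw [c.labels_fill, c.labels_fill, PTree.labels_eq_of_perm hs]
  refine ⟨?_, hlabels ▸ h.labels_subset, hlabels ▸ h.rest⟩
  rw [(c.leaves_fill_perm s').nodup_iff, (hs.append_right _).nodup_iff,
    ← (c.leaves_fill_perm s).nodup_iff]
  exact h.nodup

end ForestInsert

section Functions

variable {R : Type} [CommRing R] {M : Type*} [AddCommGroup M] [Module R M] {n : ℕ}

/-- A function on Forests which kills the symmetry and Jacobi combinations, that is, a function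
extending linearly to `PoisQ R n`. -/
structure IsPoisFunction (n : ℕ) (g : Finset PTree → M) : Prop where
  symm {c : Ctx} {A B : PTree} {F : Finset PTree}
    (h : IsForestInsert (Finset.range n) (c.fill (.node A B)) F) :
    g (insert (c.fill (.node A B)) F) + g (insert (c.fill (.node B A)) F) = 0
  jacobi {c : Ctx} {A B C : PTree} {F : Finset PTree}
    (h : IsForestInsert (Finset.range n) (c.fill (.node (.node A B) C)) F) :
    g (insert (c.fill (.node (.node A B) C)) F) + g (insert (c.fill (.node (.node B C) A)) F) +
      g (insert (c.fill (.node (.node C A) B)) F) = 0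

/-- A function on Diagrams which kills the symmetry and Arnold combinations and the Diagrams with
a doubled edge, that is, a function extending linearly to `SiopQ R n`. -/
structure IsSiopFunction (n : ℕ) (g : Multiset (ℕ × ℕ) → M) : Prop where
  symm {i j : ℕ} {E : Multiset (ℕ × ℕ)} (h : IsDiagOn n ((i, j) ::ₘ E)) :
    g ((i, j) ::ₘ E) + g ((j, i) ::ₘ E) = 0
  arnold {i j k : ℕ} {E : Multiset (ℕ × ℕ)} (hik : i ≠ k)
    (h : IsDiagOn n ((i, j) ::ₘ (j, k) ::ₘ E)) :
    g ((i, j) ::ₘ (j, k) ::ₘ E) + g ((j, k) ::ₘ (k, i) ::ₘ E) + g ((k, i) ::ₘ (i, j) ::ₘ E) = 0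
  doubled {e : ℕ × ℕ} {E : Multiset (ℕ × ℕ)} (h : IsDiagOn n (e ::ₘ e ::ₘ E)) :
    g (e ::ₘ e ::ₘ E) = 0
  doubled_swap {i j : ℕ} {E : Multiset (ℕ × ℕ)} (h : IsDiagOn n ((i, j) ::ₘ (j, i) ::ₘ E)) :
    g ((i, j) ::ₘ (j, i) ::ₘ E) = 0

variable {g : Finset PTree → M} {g' : Multiset (ℕ × ℕ) → M}

lemma isForestInsert_of_eq_insert {t : PTree} {F₀ : Finset PTree} {F : ForestOn n} (ht : t ∉ F₀)
    (hF : F.1 = insert t F₀) : IsForestInsert (Finset.range n) t F₀ :=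
  IsForestWith.isForestInsert ht (hF ▸ isForestOn_iff_isForestWith.1 F.2)

lemma IsPoisFunction.jsubF_le_ker (hg : IsPoisFunction n g) :
    JsubF R n ≤ LinearMap.ker (Finsupp.linearCombination R fun F : ForestOn n => g F.1) := by
  refine Submodule.span_le.2 ?_
  rintro x (⟨F₀, D, A, B, C, m, F₁, F₂, F₃, hD, hm, h₁, -, -, hF₁, hF₂, hF₃, rfl⟩ |
    ⟨F₀, D, A, B, m, F₁, F₂, hD, hm, h₁, -, hF₁, hF₂, rfl⟩)
  all_goals
    obtain ⟨c, hc⟩ := PTree.exists_ctx_graft_eq_fill hD (PTree.mem_labels.2 hm)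
    rw [hc] at h₁
    have hinsert := isForestInsert_of_eq_insert h₁ (hF₁.trans (by rw [hc]))
    simp only [SetLike.mem_coe, LinearMap.mem_ker, map_add, Finsupp.linearCombination_single,
      one_smul, *]
  exacts [hg.jacobi hinsert, hg.symm hinsert]

lemma IsSiopFunction.isubD_le_ker (hg : IsSiopFunction n g') :
    IsubD R n ≤ LinearMap.ker (Finsupp.linearCombination R fun E : DiagOn n => g' E.1) := by
  refine Submodule.span_le.2 ?_
  rintro x ((⟨i, j, k, E, G₁, G₂, G₃, -, -, hik, h₁, h₂, h₃, rfl⟩ |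
    ⟨i, j, E, G₁, G₂, h₁, h₂, rfl⟩) | ⟨i, j, E, G₁, h₁ | h₁, rfl⟩)
  all_goals
    have hG₁ := h₁ ▸ G₁.2
    simp only [SetLike.mem_coe, LinearMap.mem_ker, map_add, Finsupp.linearCombination_single,
      one_smul, *]
  exacts [hg.arnold hik hG₁, hg.symm hG₁, hg.doubled hG₁, hg.doubled_swap hG₁]

variable (R) in
/-- The linear map on `PoisQ R n` induced by a function on Forests. -/
def IsPoisFunction.lift (hg : IsPoisFunction n g) : PoisQ R n →ₗ[R] M :=
  (JsubF R n).liftQ _ hg.jsubF_le_ker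

variable (R) in
/-- The linear map on `SiopQ R n` induced by a function on Diagrams. -/
def IsSiopFunction.lift (hg : IsSiopFunction n g') : SiopQ R n →ₗ[R] M :=
  (IsubD R n).liftQ _ hg.isubD_le_ker

lemma IsPoisFunction.lift_mk (hg : IsPoisFunction n g) (x : PhiF R n) :
    hg.lift R (Submodule.Quotient.mk x) = x.sum fun F a => a • g F.1 := rfl

lemma IsSiopFunction.lift_mk (hg : IsSiopFunction n g') (y : DeltaF R n) :
    hg.lift R (Submodule.Quotient.mk y) = y.sum fun E a => a • g' E.1 := rfl

/-- A collection of trees which is a Forest, as an element of the basis of `PhiF R n`. -/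
def IsForestOn.toForestOn {F : Finset PTree} (h : IsForestOn n F) : ForestOn n :=
  ⟨F, h⟩

/-- A multiset of edges which is a Diagram, as an element of the basis of `DeltaF R n`. -/
def IsDiagOn.toDiagOn {E : Multiset (ℕ × ℕ)} (h : IsDiagOn n E) : DiagOn n :=
  ⟨E, h⟩

variable (R n)

/-- The class of a Forest in `PoisQ R n`, with value `0` on collections of trees which are not
Forests. -/
def forestClass (F : Finset PTree) : PoisQ R n :=
  if h : IsForestOn n F then Submodule.Quotient.mk (Finsupp.single h.toForestOn 1) else 0

/-- The class of a Diagram in `SiopQ R n`, with value `0` on multisets of edges which are not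
Diagrams. -/
def diagClass (E : Multiset (ℕ × ℕ)) : SiopQ R n :=
  if h : IsDiagOn n E then Submodule.Quotient.mk (Finsupp.single h.toDiagOn 1) else 0

variable {R n}

lemma forestClass_of_isForestOn {F : Finset PTree} (h : IsForestOn n F) :
    forestClass R n F = Submodule.Quotient.mk (Finsupp.single h.toForestOn 1) := dif_pos h

lemma diagClass_of_isDiagOn {E : Multiset (ℕ × ℕ)} (h : IsDiagOn n E) :
    diagClass R n E = Submodule.Quotient.mk (Finsupp.single h.toDiagOn 1) := dif_pos h

lemma IsPoisFunction.lift_forestClass (hg : IsPoisFunction n g) {F : Finset PTree}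
    (hF : IsForestOn n F) : hg.lift R (forestClass R n F) = g F := by
  rw [forestClass_of_isForestOn hF]
  exact (Finsupp.linearCombination_single R 1 hF.toForestOn).trans (one_smul R (g F))

lemma IsSiopFunction.lift_diagClass (hg : IsSiopFunction n g') {E : Multiset (ℕ × ℕ)}
    (hE : IsDiagOn n E) : hg.lift R (diagClass R n E) = g' E := by
  rw [diagClass_of_isDiagOn hE]
  exact (Finsupp.linearCombination_single R 1 hE.toDiagOn).trans (one_smul R (g' E))

lemma IsForestInsert.isForestOn {t : PTree} {F : Finset PTree}
    (h : IsForestInsert (Finset.range n) t F) : IsForestOn n (insert t F) :=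
  isForestOn_iff_isForestWith.2 h.isForestWith

variable (R n) in
lemma isPoisFunction_forestClass : IsPoisFunction n (forestClass R n) where
  symm {c A B F} h := by
    have h' := h.fill_of_perm (PTree.leaves_node_swap_perm A B)
    obtain ⟨t, m, ht, hm, htc⟩ := PTree.exists_graft_eq_fill h.nodup
    rw [forestClass_of_isForestOn h.isForestOn, forestClass_of_isForestOn h'.isForestOn,
      ← Submodule.Quotient.mk_add, Submodule.Quotient.mk_eq_zero]
    refine Submodule.subset_span (.inr ⟨F, t, A, B, m, _, _, ht, hm, ?_, ?_, ?_, ?_, rfl⟩) <;>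
      rw [htc]
    exacts [h.notMem, h'.notMem, rfl, rfl]
  jacobi {c A B C F} h := by
    have h' := h.fill_of_perm (PTree.leaves_node_rotate_perm A B C)
    have h'' := h'.fill_of_perm (PTree.leaves_node_rotate_perm B C A)
    obtain ⟨t, m, ht, hm, htc⟩ := PTree.exists_graft_eq_fill h.nodup
    rw [forestClass_of_isForestOn h.isForestOn, forestClass_of_isForestOn h'.isForestOn,
      forestClass_of_isForestOn h''.isForestOn, ← Submodule.Quotient.mk_add,
      ← Submodule.Quotient.mk_add, Submodule.Quotient.mk_eq_zero]
    refine Submodule.subset_span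
      (.inl ⟨F, t, A, B, C, m, _, _, _, ht, hm, ?_, ?_, ?_, ?_, ?_, ?_, rfl⟩) <;> rw [htc]
    exacts [h.notMem, h'.notMem, h''.notMem, rfl, rfl, rfl]

lemma isDiagOn_cons {e : ℕ × ℕ} {E : Multiset (ℕ × ℕ)} :
    IsDiagOn n (e ::ₘ E) ↔ (e.1 < n ∧ e.2 < n ∧ e.1 ≠ e.2) ∧ IsDiagOn n E :=
  Multiset.forall_mem_cons

lemma isDiagOn_cons_swap {i j : ℕ} {E : Multiset (ℕ × ℕ)} :
    IsDiagOn n ((i, j) ::ₘ E) ↔ IsDiagOn n ((j, i) ::ₘ E) := by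
  simp only [isDiagOn_cons]
  grind

variable (R n) in
lemma isSiopFunction_diagClass : IsSiopFunction n (diagClass R n) where
  symm {i j E} h := by
    rw [diagClass_of_isDiagOn h, diagClass_of_isDiagOn (isDiagOn_cons_swap.1 h),
      ← Submodule.Quotient.mk_add, Submodule.Quotient.mk_eq_zero]
    exact Submodule.subset_span (.inl (.inr ⟨i, j, E, _, _, rfl, rfl, rfl⟩))
  arnold {i j k E} hik h := by
    have h₂ : IsDiagOn n ((j, k) ::ₘ (k, i) ::ₘ E) := by simp only [isDiagOn_cons] at h ⊢; grind
    have h₃ : IsDiagOn n ((k, i) ::ₘ (i, j) ::ₘ E) := by simp only [isDiagOn_cons] at h ⊢; grind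
    have hij : i ≠ j := (isDiagOn_cons.1 h).1.2.2
    have hjk : j ≠ k := (isDiagOn_cons.1 h₂).1.2.2
    rw [diagClass_of_isDiagOn h, diagClass_of_isDiagOn h₂, diagClass_of_isDiagOn h₃,
      ← Submodule.Quotient.mk_add, ← Submodule.Quotient.mk_add, Submodule.Quotient.mk_eq_zero]
    exact Submodule.subset_span
      (.inl (.inl ⟨i, j, k, E, _, _, _, hij, hjk, hik, rfl, rfl, rfl, rfl⟩))
  doubled {e E} h := by
    rw [diagClass_of_isDiagOn h, Submodule.Quotient.mk_eq_zero]
    exact Submodule.subset_span (.inr ⟨e.1, e.2, E, _, .inl rfl, rfl⟩)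
  doubled_swap {i j E} h := by
    rw [diagClass_of_isDiagOn h, Submodule.Quotient.mk_eq_zero]
    exact Submodule.subset_span (.inr ⟨i, j, E, _, .inr rfl, rfl⟩)

lemma span_range_mk_single {ι : Type*} (N : Submodule R (ι →₀ R)) :
    Submodule.span R (Set.range fun i => N.mkQ (Finsupp.single i 1)) = ⊤ := by
  rw [Set.range_comp' N.mkQ, ← Submodule.map_span, ← Finsupp.coe_basisSingleOne,
    Module.Basis.span_eq, Submodule.map_top, Submodule.range_mkQ]

variable (R n)

lemma span_forestClass :
    Submodule.span R (Set.range fun F : ForestOn n => forestClass R n F.1) = ⊤ := by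
  refine Eq.trans ?_ (span_range_mk_single (JsubF R n))
  congr! 3 with F
  exact forestClass_of_isForestOn F.2

lemma span_diagClass :
    Submodule.span R (Set.range fun E : DiagOn n => diagClass R n E.1) = ⊤ := by
  refine Eq.trans ?_ (span_range_mk_single (IsubD R n))
  congr! 3 with E
  exact diagClass_of_isDiagOn E.2

end Functions

section Pairing

variable {R : Type} [CommRing R] {n : ℕ}

lemma forestPoly_symm {S : Finset ℕ} {c : Ctx} {A B : PTree} {F : Finset PTree}
    (h : IsForestInsert S (c.fill (.node A B)) F) :
    forestPoly (insert (c.fill (.node A B)) F) +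
      forestPoly (insert (c.fill (.node B A)) F) = 0 := by
  have hperm := PTree.leaves_node_swap_perm A B
  rw [forestPoly_insert h.notMem, forestPoly_insert (h.fill_of_perm hperm).notMem, treePoly_fill,
    treePoly_fill, PTree.labels_eq_of_perm hperm]
  linear_combination (c.poly _ * forestPoly F) * treePoly_node_swap A B

lemma forestPoly_jacobi {S : Finset ℕ} {c : Ctx} {A B C : PTree} {F : Finset PTree}
    (h : IsForestInsert S (c.fill (.node (.node A B) C)) F) :
    forestPoly (insert (c.fill (.node (.node A B) C)) F) +
      forestPoly (insert (c.fill (.node (.node B C) A)) F) +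
      forestPoly (insert (c.fill (.node (.node C A) B)) F) = 0 := by
  have hperm := PTree.leaves_node_rotate_perm A B C
  have hperm' := (PTree.leaves_node_rotate_perm B C A).trans hperm
  obtain ⟨hAB, -, hABC⟩ := PTree.nodup_leaves_node.1 (Ctx.nodup_leaves_fill.1 h.nodup).1
  rw [PTree.labels_node, Finset.disjoint_union_left] at hABC
  rw [forestPoly_insert h.notMem, forestPoly_insert (h.fill_of_perm hperm).notMem,
    forestPoly_insert (h.fill_of_perm hperm').notMem, treePoly_fill, treePoly_fill, treePoly_fill,
    PTree.labels_eq_of_perm hperm, PTree.labels_eq_of_perm hperm']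
  linear_combination (c.poly _ * forestPoly F) *
    treePoly_jacobi (PTree.nodup_leaves_node.1 hAB).2.2 hABC.2 hABC.1.symm

variable (R) in
lemma isPoisFunction_pairDF (E : Multiset (ℕ × ℕ)) :
    IsPoisFunction n fun F => (pairDF E F : R) where
  symm {c A B F} h := by
    have h' := h.fill_of_perm (PTree.leaves_node_swap_perm A B)
    simp only [pairDF_eq_coeff_forestPoly h.isForestWith,
      pairDF_eq_coeff_forestPoly h'.isForestWith]
    rw [← Int.cast_add, ← MvPolynomial.coeff_add, forestPoly_symm h,
      MvPolynomial.coeff_zero, Int.cast_zero]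
  jacobi {c A B C F} h := by
    have h' := h.fill_of_perm (PTree.leaves_node_rotate_perm A B C)
    have h'' := h'.fill_of_perm (PTree.leaves_node_rotate_perm B C A)
    simp only [pairDF_eq_coeff_forestPoly h.isForestWith,
      pairDF_eq_coeff_forestPoly h'.isForestWith, pairDF_eq_coeff_forestPoly h''.isForestWith]
    rw [← Int.cast_add, ← Int.cast_add, ← MvPolynomial.coeff_add, ← MvPolynomial.coeff_add,
      forestPoly_jacobi h, MvPolynomial.coeff_zero, Int.cast_zero]

lemma isSiopFunction_pairDF {F : Finset PTree} (hF : IsForestOn n F) :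
    IsSiopFunction n fun E => (pairDF E F : R) := by
  have hF' := isForestOn_iff_isForestWith.1 hF
  have hP := isArnold_forestPoly hF'
  simp only [pairDF_eq_coeff_forestPoly hF']
  refine ⟨fun {i j E} _ => ?_, fun {i j k E} hik h => ?_, fun {e E} _ => ?_, fun {i j E} _ => ?_⟩
  · exact_mod_cast congrArg (Int.cast : ℤ → R) (hP.coeff_symm E i j)
  · have hij : i ≠ j := (isDiagOn_cons.1 h).1.2.2
    have hjk : j ≠ k := (isDiagOn_cons.1 (isDiagOn_cons.1 h).2).1.2.2
    exact_mod_cast congrArg (Int.cast : ℤ → R) (hP.coeff_arnold E hij hjk hik)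
  · rw [hP.coeff_doubled E, Int.cast_zero]
  · rw [hP.coeff_doubled_swap E, Int.cast_zero]

lemma isSiopFunction_lift_pairDF :
    IsSiopFunction n fun E => (isPoisFunction_pairDF (n := n) R E).lift R := by
  have key {E : Multiset (ℕ × ℕ)} (F : ForestOn n) :
      (isPoisFunction_pairDF R E).lift R (forestClass R n F.1) = pairDF E F.1 :=
    (isPoisFunction_pairDF R E).lift_forestClass F.2
  refine ⟨fun h => ?_, fun hik h => ?_, fun h => ?_, fun h => ?_⟩ <;>
    refine LinearMap.ext_on_range (span_forestClass R n) fun F => ?_ <;>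
    simp only [LinearMap.add_apply, key, LinearMap.zero_apply]
  exacts [(isSiopFunction_pairDF F.2).symm h, (isSiopFunction_pairDF F.2).arnold hik h,
    (isSiopFunction_pairDF F.2).doubled h, (isSiopFunction_pairDF F.2).doubled_swap h]

variable (R n) in
/-- The configuration pairing between `SiopQ R n` and `PoisQ R n`. -/
def pairing : SiopQ R n →ₗ[R] PoisQ R n →ₗ[R] R := isSiopFunction_lift_pairDF.lift R

lemma pairing_diagClass_forestClass {E : Multiset (ℕ × ℕ)} {F : Finset PTree} (hE : IsDiagOn n E)
    (hF : IsForestOn n F) : pairing R n (diagClass R n E) (forestClass R n F) = pairDF E F := by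
  rw [pairing, IsSiopFunction.lift_diagClass _ hE, IsPoisFunction.lift_forestClass _ hF]

lemma pairing_mk_mk (y : DeltaF R n) (x : PhiF R n) :
    pairing R n (Submodule.Quotient.mk y) (Submodule.Quotient.mk x) = pairDFF y x := by
  rw [pairing, IsSiopFunction.lift_mk, Finsupp.sum, LinearMap.sum_apply, pairDFF, Finsupp.sum]
  refine Finset.sum_congr rfl fun E _ => ?_
  rw [LinearMap.smul_apply, IsPoisFunction.lift_mk, Finsupp.smul_sum]
  simp only [smul_eq_mul, mul_assoc]

end Pairing

namespace PTree

/-- The tree obtained from `t` by replacing the leaf `i` by a cherry with leaves `i` and `n`. -/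
def splitLeaf (i n : ℕ) (t : PTree) : PTree := t.graft i (.node (.leaf i) (.leaf n))

variable {i n : ℕ} {t : PTree}

lemma splitLeaf_of_notMem (hi : i ∉ t.labels) : t.splitLeaf i n = t := graft_of_notMem hi _

lemma leaves_fill_cherry_perm (c : Ctx) (i n : ℕ) :
    (c.fill (node (leaf i) (leaf n))).leaves.Perm (n :: (c.fill (leaf i)).leaves) :=
  (c.leaves_fill_perm _).trans
    (((List.Perm.swap n i []).append_right _).trans ((c.leaves_fill_perm (leaf i)).symm.cons n))

lemma leaves_splitLeaf_perm (ht : t.leaves.Nodup) (hi : i ∈ t.labels) :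
    (t.splitLeaf i n).leaves.Perm (n :: t.leaves) := by
  obtain ⟨c, hc⟩ := exists_ctx_graft_eq_fill ht hi
  rw [splitLeaf, hc, ← graft_leaf_self t i, hc]
  exact leaves_fill_cherry_perm c i n

end PTree

section Extend

variable {S : Finset ℕ} {F : Finset PTree} {t : PTree} {i n : ℕ}

lemma IsForestWith.isForestInsert_leaf (h : IsForestWith S F) (hn : n ∉ S) :
    IsForestInsert (insert n S) (.leaf n) F where
  nodup := List.nodup_singleton n
  labels_subset := by simp [PTree.labels_leaf]
  rest := by rwa [PTree.labels_leaf, Finset.sdiff_singleton_eq_erase, Finset.erase_insert hn]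

lemma IsForestInsert.insert_leaf (h : IsForestInsert S t F) (hn : n ∉ S) :
    IsForestInsert (insert n S) t (insert (.leaf n) F) where
  nodup := h.nodup
  labels_subset := h.labels_subset.trans (Finset.subset_insert n S)
  rest := by
    rw [Finset.insert_sdiff_of_notMem _ (Finset.notMem_mono h.labels_subset hn)]
    exact (h.rest.isForestInsert_leaf fun h' => hn (Finset.sdiff_subset h')).isForestWith

lemma IsForestWith.image_splitLeaf_of_notMem (h : IsForestWith S F) (hi : i ∉ S) :
    F.image (PTree.splitLeaf i n) = F :=
  (Finset.image_congr fun _ ht => PTree.splitLeaf_of_notMem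
    (Finset.notMem_mono (h.labels_subset ht) hi)).trans Finset.image_id

lemma IsForestInsert.image_splitLeaf_of_mem (h : IsForestInsert S t F) (hi : i ∈ t.labels) :
    F.image (PTree.splitLeaf i n) = F :=
  h.rest.image_splitLeaf_of_notMem fun h' => (Finset.mem_sdiff.1 h').2 hi

lemma isForestInsert_insert_iff_of_perm_cons {s : PTree} (hn : n ∉ S)
    (hst : s.leaves.Perm (n :: t.leaves)) :
    IsForestInsert (insert n S) s F ↔ IsForestInsert S t F := by
  have hlabels : s.labels = insert n t.labels := by
    rw [PTree.labels, List.toFinset_eq_of_perm _ _ hst, List.toFinset_cons, PTree.labels]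
  have hnodup : s.leaves.Nodup ↔ n ∉ t.labels ∧ t.leaves.Nodup := by
    rw [hst.nodup_iff, List.nodup_cons, PTree.mem_labels]
  have hrest : insert n S \ s.labels = S \ t.labels := by
    rw [hlabels, Finset.insert_sdiff_insert, Finset.sdiff_insert_of_notMem hn]
  refine ⟨fun h => ?_, fun h => ?_⟩
  · obtain ⟨hnt, ht⟩ := hnodup.1 h.nodup
    exact ⟨ht, (Finset.insert_subset_insert_iff hnt).1 (hlabels ▸ h.labels_subset), hrest ▸ h.rest⟩
  · exact ⟨hnodup.2 ⟨Finset.notMem_mono h.labels_subset hn, h.nodup⟩,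
      hlabels ▸ Finset.insert_subset_insert n h.labels_subset, hrest ▸ h.rest⟩

lemma IsForestInsert.splitLeaf (h : IsForestInsert S t F) (hi : i ∈ t.labels) (hn : n ∉ S) :
    IsForestInsert (insert n S) (t.splitLeaf i n) F :=
  (isForestInsert_insert_iff_of_perm_cons hn (PTree.leaves_splitLeaf_perm h.nodup hi)).2 h

lemma IsForestWith.image_splitLeaf (h : IsForestWith S F) (hi : i ∈ S) (hn : n ∉ S) :
    IsForestWith (insert n S) (F.image (PTree.splitLeaf i n)) := by
  obtain ⟨t, F, hit, rfl, ht⟩ := h.exists_isForestInsert hi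
  rw [Finset.image_insert, ht.image_splitLeaf_of_mem hit]
  exact (ht.splitLeaf hit hn).isForestWith

lemma IsForestInsert.image_splitLeaf (h : IsForestInsert S t F) (hi : i ∈ S) (hn : n ∉ S) :
    IsForestInsert (insert n S) (t.splitLeaf i n) (F.image (PTree.splitLeaf i n)) := by
  by_cases hit : i ∈ t.labels
  · rw [h.image_splitLeaf_of_mem hit]
    exact h.splitLeaf hit hn
  · rw [PTree.splitLeaf_of_notMem hit]
    refine ⟨h.nodup, h.labels_subset.trans (Finset.subset_insert n S), ?_⟩
    rw [Finset.insert_sdiff_of_notMem _ (Finset.notMem_mono h.labels_subset hn)]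
    exact h.rest.image_splitLeaf (Finset.mem_sdiff.2 ⟨hi, hit⟩)
      (Finset.notMem_mono Finset.sdiff_subset hn)

/-- The Forests on `n + 1` labels obtained from a Forest on `n` labels by adding the leaf `n`,
either as a tree of its own or by forming a cherry with the leaf `i`. -/
def extendForest (n : ℕ) : Option (Fin n) → Finset PTree → Finset PTree
  | none, F => insert (.leaf n) F
  | some i, F => F.image (PTree.splitLeaf i n)

/-- The Diagrams on `n + 1` vertices obtained from a Diagram on `n` vertices by adding the vertex
`n`, either isolated or with an edge to the vertex `i`. -/
def extendDiag (n : ℕ) : Option (Fin n) → Multiset (ℕ × ℕ) → Multiset (ℕ × ℕ)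
  | none, E => E
  | some i, E => (n, i) ::ₘ E

variable {M : Type*} [AddCommGroup M] {g : Finset PTree → M} {g' : Multiset (ℕ × ℕ) → M}

lemma IsForestOn.extendForest (h : IsForestOn n F) (o : Option (Fin n)) :
    IsForestOn (n + 1) (extendForest n o F) := by
  rw [isForestOn_iff_isForestWith] at h ⊢
  rw [Finset.range_add_one]
  cases o with
  | none => exact (h.isForestInsert_leaf Finset.notMem_range_self).isForestWith
  | some i => exact h.image_splitLeaf (Finset.mem_range.2 i.2) Finset.notMem_range_self

lemma IsDiagOn.succ {E : Multiset (ℕ × ℕ)} (h : IsDiagOn n E) : IsDiagOn (n + 1) E :=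
  fun e he => ⟨(h e he).1.trans n.lt_succ_self, (h e he).2.1.trans n.lt_succ_self, (h e he).2.2⟩

lemma IsDiagOn.extendDiag {E : Multiset (ℕ × ℕ)} (h : IsDiagOn n E) (o : Option (Fin n)) :
    IsDiagOn (n + 1) (extendDiag n o E) := by
  cases o with
  | none => exact h.succ
  | some i => exact isDiagOn_cons.2 ⟨⟨n.lt_succ_self, i.2.trans n.lt_succ_self, i.2.ne'⟩, h.succ⟩

lemma IsPoisFunction.comp_extendForest (hg : IsPoisFunction (n + 1) g) (o : Option (Fin n)) :
    IsPoisFunction n fun F => g (extendForest n o F) := by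
  cases o with
  | none =>
    refine ⟨fun {c A B F} h => ?_, fun {c A B C F} h => ?_⟩ <;>
      have h' := h.insert_leaf Finset.notMem_range_self <;>
      rw [← Finset.range_add_one] at h' <;>
      simp only [extendForest, Finset.insert_comm (PTree.leaf n)]
    exacts [hg.symm h', hg.jacobi h']
  | some i =>
    refine ⟨fun {c A B F} h => ?_, fun {c A B C F} h => ?_⟩ <;>
      have h' := h.image_splitLeaf (Finset.mem_range.2 i.2) Finset.notMem_range_self <;>
      rw [← Finset.range_add_one] at h' <;>
      simp only [extendForest, Finset.image_insert, PTree.splitLeaf, PTree.graft_fill,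
        PTree.graft] at h' ⊢
    exacts [hg.symm h', hg.jacobi h']

lemma IsSiopFunction.comp_extendDiag (hg : IsSiopFunction (n + 1) g') (o : Option (Fin n)) :
    IsSiopFunction n fun E => g' (extendDiag n o E) := by
  cases o with
  | none => exact ⟨fun h => hg.symm h.succ, fun hik h => hg.arnold hik h.succ,
      fun h => hg.doubled h.succ, fun h => hg.doubled_swap h.succ⟩
  | some i =>
    refine ⟨fun h => ?_, fun hik h => ?_, fun h => ?_, fun h => ?_⟩ <;>
      have h' := h.extendDiag (some i) <;>
      simp only [GTPairing.extendDiag, Multiset.cons_swap ((n, i) : ℕ × ℕ)] at h' ⊢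
    exacts [hg.symm h', hg.arnold hik h', hg.doubled h', hg.doubled_swap h']

variable (R : Type) [CommRing R]

/-- The map on classes of Forests induced by `extendForest`. -/
def poisExtend (o : Option (Fin n)) : PoisQ R n →ₗ[R] PoisQ R (n + 1) :=
  ((isPoisFunction_forestClass R (n + 1)).comp_extendForest o).lift R

/-- The map on classes of Diagrams induced by `extendDiag`. -/
def siopExtend (o : Option (Fin n)) : SiopQ R n →ₗ[R] SiopQ R (n + 1) :=
  ((isSiopFunction_diagClass R (n + 1)).comp_extendDiag o).lift R

lemma poisExtend_forestClass (hF : IsForestOn n F) (o : Option (Fin n)) :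
    poisExtend R o (forestClass R n F) = forestClass R (n + 1) (extendForest n o F) :=
  IsPoisFunction.lift_forestClass _ hF

lemma siopExtend_diagClass {E : Multiset (ℕ × ℕ)} (hE : IsDiagOn n E) (o : Option (Fin n)) :
    siopExtend R o (diagClass R n E) = diagClass R (n + 1) (extendDiag n o E) :=
  IsSiopFunction.lift_diagClass _ hE

lemma exists_eq_leaf_or_eq_fill_node_leaf {a : ℕ} (ha : a ∈ t.labels) :
    t = .leaf a ∨ ∃ (c : Ctx) (B : PTree),
      t = c.fill (.node B (.leaf a)) ∨ t = c.fill (.node (.leaf a) B) := by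
  induction t with
  | leaf b =>
    rw [PTree.labels_leaf, Finset.mem_singleton] at ha
    exact .inl (congrArg _ ha.symm)
  | node l r hl hr =>
    right
    obtain hal | har := Finset.mem_union.1 (PTree.labels_node l r ▸ ha)
    · obtain rfl | ⟨c, B, h⟩ := hl hal
      · exact ⟨.hole, r, .inr rfl⟩
      · exact ⟨.left c r, B, h.imp (congrArg (PTree.node · r)) (congrArg (PTree.node · r))⟩
    · obtain rfl | ⟨c, B, h⟩ := hr har
      · exact ⟨.hole, l, .inl rfl⟩
      · exact ⟨.right l c, B, h.imp (congrArg (PTree.node l)) (congrArg (PTree.node l))⟩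

lemma forestClass_insert_leaf_mem (h : IsForestInsert (Finset.range (n + 1)) (.leaf n) F) :
    forestClass R (n + 1) (insert (.leaf n) F) ∈
      ⨆ o, LinearMap.range (poisExtend (n := n) R o) := by
  have hF : IsForestOn n F := isForestOn_iff_isForestWith.2 <| by
    simpa [PTree.labels_leaf, Finset.range_add_one, Finset.sdiff_singleton_eq_erase] using h.rest
  exact Submodule.mem_iSup_of_mem none ⟨forestClass R n F, poisExtend_forestClass R hF none⟩

lemma forestClass_insert_cherry_mem {c : Ctx}
    (h : IsForestInsert (Finset.range (n + 1)) (c.fill (.node (.leaf i) (.leaf n))) F) :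
    forestClass R (n + 1) (insert (c.fill (.node (.leaf i) (.leaf n))) F) ∈
      ⨆ o, LinearMap.range (poisExtend (n := n) R o) := by
  have hF : IsForestInsert (Finset.range n) (c.fill (.leaf i)) F := by
    rw [Finset.range_add_one] at h
    exact (isForestInsert_insert_iff_of_perm_cons Finset.notMem_range_self
      (PTree.leaves_fill_cherry_perm c i n)).1 h
  have hic : i ∉ c.labels := by
    simpa [PTree.labels_leaf] using (Ctx.nodup_leaves_fill.1 hF.nodup).2.2
  have hi : i ∈ (c.fill (.leaf i)).labels := by simp [Ctx.labels_fill, PTree.labels_leaf]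
  refine Submodule.mem_iSup_of_mem (some ⟨i, Finset.mem_range.1 (hF.labels_subset hi)⟩)
    ⟨forestClass R n (insert (c.fill (.leaf i)) F), ?_⟩
  rw [poisExtend_forestClass R hF.isForestOn, extendForest, Finset.image_insert,
    hF.image_splitLeaf_of_mem hi, PTree.splitLeaf, PTree.graft_fill_leaf hic]

/-- The Jacobi relation moves the leaf `n` towards the leaves of `B`. -/
lemma forestClass_insert_fill_node_leaf_mem {c : Ctx} {B : PTree}
    (h : IsForestInsert (Finset.range (n + 1)) (c.fill (.node B (.leaf n))) F) :
    forestClass R (n + 1) (insert (c.fill (.node B (.leaf n))) F) ∈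
      ⨆ o, LinearMap.range (poisExtend (n := n) R o) := by
  induction B generalizing c with
  | leaf i => exact forestClass_insert_cherry_mem R h
  | node A B hA hB =>
    have hclass := isPoisFunction_forestClass R (n + 1)
    have hBn := h.fill_of_perm (PTree.leaves_node_rotate_perm A B (.leaf n))
    have hnA := hBn.fill_of_perm (PTree.leaves_node_rotate_perm B (.leaf n) A)
    have hAn := IsForestInsert.fill_of_perm (c := c.comp (.left .hole B)) (by rwa [Ctx.fill_comp])
      (PTree.leaves_node_swap_perm (.leaf n) A)
    have hswap := hclass.symm (c := c.comp (.left .hole B)) (by rwa [Ctx.fill_comp])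
    have hmemA := hA hAn
    have hmemB := hB (c := c.comp (.left .hole A)) (by rwa [Ctx.fill_comp])
    simp only [Ctx.fill_comp, Ctx.fill] at hswap hmemA hmemB
    rw [eq_neg_of_add_eq_zero_left ((add_assoc _ _ _).symm.trans (hclass.jacobi h)),
      eq_neg_of_add_eq_zero_left hswap]
    exact neg_mem (add_mem hmemB (neg_mem hmemA))

lemma iSup_range_poisExtend : ⨆ o, LinearMap.range (poisExtend (n := n) R o) = ⊤ := by
  rw [eq_top_iff, ← span_forestClass, Submodule.span_le]
  rintro _ ⟨F, rfl⟩
  obtain ⟨t, F₀, hnt, hF, ht⟩ := (isForestOn_iff_isForestWith.1 F.2).exists_isForestInsert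
    (Finset.self_mem_range_succ n)
  change forestClass R (n + 1) F.1 ∈ _
  rw [hF]
  obtain rfl | ⟨c, B, rfl | rfl⟩ := exists_eq_leaf_or_eq_fill_node_leaf hnt
  · exact forestClass_insert_leaf_mem R ht
  · exact forestClass_insert_fill_node_leaf_mem R ht
  · rw [eq_neg_of_add_eq_zero_left ((isPoisFunction_forestClass R (n + 1)).symm ht)]
    exact neg_mem (forestClass_insert_fill_node_leaf_mem R
      (ht.fill_of_perm (PTree.leaves_node_swap_perm _ _)))

lemma isDiagOn_zero (n : ℕ) : IsDiagOn n 0 := fun e he => absurd he (Multiset.notMem_zero e)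

lemma isDiagOn_add {E E' : Multiset (ℕ × ℕ)} :
    IsDiagOn n (E + E') ↔ IsDiagOn n E ∧ IsDiagOn n E' := by
  simp only [IsDiagOn, Multiset.mem_add, or_imp, forall_and]
  tauto

lemma isDiagOn_map_prodMk {s : Multiset ℕ} (hs : ∀ i ∈ s, i < n) :
    IsDiagOn (n + 1) (s.map (Prod.mk n)) :=
  Multiset.forall_mem_map_iff.2 fun i hi =>
    ⟨n.lt_succ_self, (hs i hi).trans n.lt_succ_self, (hs i hi).ne'⟩

/-- The Arnold relation as a partial fraction decomposition: the number of edges at `v` drops. -/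
lemma IsSiopFunction.apply_cons_cons_eq_sub (hg : IsSiopFunction n g') {v i j : ℕ} (hij : i ≠ j)
    {E : Multiset (ℕ × ℕ)} (h : IsDiagOn n ((v, i) ::ₘ (v, j) ::ₘ E)) :
    g' ((v, i) ::ₘ (v, j) ::ₘ E) = g' ((v, i) ::ₘ (i, j) ::ₘ E) - g' ((v, j) ::ₘ (i, j) ::ₘ E) := by
  rw [Multiset.cons_swap] at h
  have harnold := hg.arnold hij.symm (isDiagOn_cons_swap.1 h)
  have hjv := hg.symm h
  have hij' : IsDiagOn n ((v, j) ::ₘ (i, j) ::ₘ E) := by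
    simp only [isDiagOn_cons] at h ⊢
    exact ⟨h.1, ⟨h.2.1.2.1, h.1.2.1, hij⟩, h.2.2⟩
  have hjvij := hg.symm hij'
  rw [Multiset.cons_swap (i, j)] at harnold
  rw [Multiset.cons_swap, eq_neg_of_add_eq_zero_left hjv, eq_sub_iff_add_eq,
    eq_neg_of_add_eq_zero_left hjvij, ← neg_add, neg_eq_iff_add_eq_zero, add_right_comm]
  exact harnold

lemma diagClass_cons_map_add_mem {s : Multiset ℕ} {E : Multiset (ℕ × ℕ)} {i : ℕ} (hi : i < n)
    (hs : ∀ j ∈ s, j < n) (hE : IsDiagOn n E) :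
    diagClass R (n + 1) ((n, i) ::ₘ (s.map (Prod.mk n) + E)) ∈
      ⨆ o, LinearMap.range (siopExtend (n := n) R o) := by
  have hclass := isSiopFunction_diagClass R (n + 1)
  induction s using Multiset.induction generalizing i E with
  | empty =>
    rw [Multiset.map_zero, zero_add]
    exact Submodule.mem_iSup_of_mem (some ⟨i, hi⟩) ⟨_, siopExtend_diagClass R hE (some ⟨i, hi⟩)⟩
  | cons j s ih =>
    have hdiag := isDiagOn_add.2
      ⟨isDiagOn_map_prodMk (Multiset.forall_mem_cons.2 ⟨hi, hs⟩), hE.succ⟩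
    obtain ⟨hj, hs⟩ := Multiset.forall_mem_cons.1 hs
    simp only [Multiset.map_cons, Multiset.cons_add] at hdiag ⊢
    obtain rfl | hij := eq_or_ne i j
    · rw [hclass.doubled hdiag]
      exact zero_mem _
    · have hE' : IsDiagOn n ((i, j) ::ₘ E) := isDiagOn_cons.2 ⟨⟨hi, hj, hij⟩, hE⟩
      rw [hclass.apply_cons_cons_eq_sub hij hdiag, ← Multiset.add_cons]
      exact sub_mem (ih hi hs hE') (ih hj hs hE')

lemma diagClass_add_map_add_mem {s : Multiset ℕ} {E E' : Multiset (ℕ × ℕ)} (hE : IsDiagOn (n + 1) E)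
    (hs : ∀ i ∈ s, i < n) (hE' : IsDiagOn n E') :
    diagClass R (n + 1) (E + (s.map (Prod.mk n) + E')) ∈
      ⨆ o, LinearMap.range (siopExtend (n := n) R o) := by
  induction E using Multiset.induction generalizing s E' with
  | empty =>
    rw [zero_add]
    induction s using Multiset.induction with
    | empty =>
      rw [Multiset.map_zero, zero_add]
      exact Submodule.mem_iSup_of_mem none ⟨_, siopExtend_diagClass R hE' none⟩
    | cons i s =>
      obtain ⟨hi, hs⟩ := Multiset.forall_mem_cons.1 hs
      rw [Multiset.map_cons, Multiset.cons_add]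
      exact diagClass_cons_map_add_mem R hi hs hE'
  | cons e E ih =>
    obtain ⟨⟨hi, hj, hij⟩, hE₀⟩ := isDiagOn_cons.1 hE
    obtain ⟨i, j⟩ := e
    have hmem_n {k : ℕ} (hk : k < n) :
        diagClass R (n + 1) ((n, k) ::ₘ (E + (s.map (Prod.mk n) + E'))) ∈
          ⨆ o, LinearMap.range (siopExtend (n := n) R o) := by
      simpa only [Multiset.map_cons, Multiset.cons_add, Multiset.add_cons] using
        ih hE₀ (Multiset.forall_mem_cons.2 ⟨hk, hs⟩) hE'
    rw [Multiset.cons_add]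
    obtain rfl | hin := eq_or_ne n i
    · exact hmem_n (Nat.lt_of_le_of_ne (Nat.lt_succ_iff.1 hj) hij.symm)
    have hi' : i < n := Nat.lt_of_le_of_ne (Nat.lt_succ_iff.1 hi) hin.symm
    obtain rfl | hjn := eq_or_ne n j
    · have hdiag : IsDiagOn (n + 1) ((i, n) ::ₘ (E + (s.map (Prod.mk n) + E'))) := by
        rw [← Multiset.cons_add]
        exact isDiagOn_add.2 ⟨hE, isDiagOn_add.2 ⟨isDiagOn_map_prodMk hs, hE'.succ⟩⟩
      rw [eq_neg_of_add_eq_zero_left ((isSiopFunction_diagClass R (n + 1)).symm hdiag)]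
      exact neg_mem (hmem_n hi')
    · have hj' : j < n := Nat.lt_of_le_of_ne (Nat.lt_succ_iff.1 hj) hjn.symm
      simpa only [Multiset.add_cons] using ih hE₀ hs (isDiagOn_cons.2 ⟨⟨hi', hj', hij⟩, hE'⟩)

lemma iSup_range_siopExtend : ⨆ o, LinearMap.range (siopExtend (n := n) R o) = ⊤ := by
  rw [eq_top_iff, ← span_diagClass, Submodule.span_le]
  rintro _ ⟨E, rfl⟩
  simpa using diagClass_add_map_add_mem (s := 0) R E.2 (by simp) (isDiagOn_zero n)

end Extend

section RestrictVars

open MvPolynomial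

variable {σ A : Type*} [CommSemiring A] {V : Set σ}

/-- The substitution setting all variables outside of `V` to zero. -/
def restrictVars (A : Type*) [CommSemiring A] (V : Set σ) :
    MvPolynomial σ A →ₐ[A] MvPolynomial σ A :=
  aeval fun e => if e ∈ V then X e else 0

lemma restrictVars_X (e : σ) : restrictVars A V (X e) = if e ∈ V then X e else 0 := aeval_X _ e

lemma coeff_restrictVars {m : σ →₀ ℕ} (hm : (m.support : Set σ) ⊆ V) (P : MvPolynomial σ A) :
    coeff m (restrictVars A V P) = coeff m P := by
  induction P using MvPolynomial.induction_on generalizing m with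
  | C a => rw [restrictVars, aeval_C, algebraMap_eq]
  | add P Q hP hQ => rw [map_add, coeff_add, coeff_add, hP hm, hQ hm]
  | mul_X P e hP =>
    rw [map_mul, restrictVars_X, coeff_mul_X']
    by_cases he : e ∈ m.support
    · rw [if_pos (hm he), coeff_mul_X', if_pos he, if_pos he]
      exact hP ((Finset.coe_subset.2 Finsupp.support_tsub).trans hm)
    · rw [if_neg he, mul_ite, mul_zero]
      split_ifs
      · rw [coeff_mul_X', if_neg he]
      · rfl

end RestrictVars

section Duality

open MvPolynomial

variable {n : ℕ}

/-- The oriented edges not incident to the vertex `n`. -/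
def edgesAvoiding (n : ℕ) : Set (ℕ × ℕ) := {e | e.1 ≠ n ∧ e.2 ≠ n}

lemma restrictVars_edgesAvoiding_splitForm (A B : Finset ℕ) :
    restrictVars ℤ (edgesAvoiding n) (splitForm A B) = splitForm (A.erase n) (B.erase n) := by
  have hprod (A B : Finset ℕ) :
      (A ×ˢ B).filter (· ∈ edgesAvoiding n) = A.erase n ×ˢ B.erase n := by
    ext e
    rw [Finset.mem_filter, Finset.mem_product, Finset.mem_product, Finset.mem_erase,
      Finset.mem_erase, and_and_and_comm, and_comm]
    rfl
  simp only [splitForm, map_sub, map_sum, restrictVars_X, ← Finset.sum_filter, hprod]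

lemma restrictVars_edgesAvoiding_treePoly {t : PTree} (hn : n ∉ t.labels) :
    restrictVars ℤ (edgesAvoiding n) (treePoly t) = treePoly t := by
  induction t with
  | leaf a => exact map_one _
  | node l r hl hr =>
    rw [PTree.labels_node, Finset.notMem_union] at hn
    rw [treePoly, map_mul, map_mul, hl hn.1, hr hn.2, restrictVars_edgesAvoiding_splitForm,
      Finset.erase_eq_of_notMem hn.1, Finset.erase_eq_of_notMem hn.2]

lemma restrictVars_edgesAvoiding_ctxPoly {c : Ctx} (hn : n ∉ c.labels) (S : Finset ℕ) :
    restrictVars ℤ (edgesAvoiding n) (c.poly S) = c.poly (S.erase n) := by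
  induction c with
  | hole => exact map_one _
  | left c r ih =>
    rw [Ctx.labels_left, Finset.notMem_union] at hn
    rw [Ctx.poly, map_mul, map_mul, ih hn.1, restrictVars_edgesAvoiding_treePoly hn.2,
      restrictVars_edgesAvoiding_splitForm, Finset.erase_union_distrib,
      Finset.erase_eq_of_notMem hn.1, Finset.erase_eq_of_notMem hn.2, Ctx.poly]
  | right l c ih =>
    rw [Ctx.labels_right, Finset.notMem_union] at hn
    rw [Ctx.poly, map_mul, map_mul, ih hn.2, restrictVars_edgesAvoiding_treePoly hn.1,
      restrictVars_edgesAvoiding_splitForm, Finset.erase_union_distrib,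
      Finset.erase_eq_of_notMem hn.1, Finset.erase_eq_of_notMem hn.2, Ctx.poly]

variable {S : Finset ℕ} {F : Finset PTree} {E : Multiset (ℕ × ℕ)} {i j : ℕ}

lemma restrictVars_edgesAvoiding_forestPoly (hF : IsForestWith S F) (hn : n ∉ S) :
    restrictVars ℤ (edgesAvoiding n) (forestPoly F) = forestPoly F := by
  rw [forestPoly, map_prod]
  exact Finset.prod_congr rfl fun t ht =>
    restrictVars_edgesAvoiding_treePoly (Finset.notMem_mono (hF.labels_subset ht) hn)

lemma exists_forestPoly_image_splitLeaf (hF : IsForestWith S F) (hi : i ∈ S) (hn : n ∉ S) :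
    ∃ Q, forestPoly (F.image (PTree.splitLeaf i n)) = splitForm {i} {n} * Q ∧
      restrictVars ℤ (edgesAvoiding n) Q = forestPoly F := by
  obtain ⟨t, F, hit, rfl, ht⟩ := hF.exists_isForestInsert hi
  obtain ⟨c, hc⟩ := PTree.exists_ctx_graft_eq_fill ht.nodup hit
  have htc : t = c.fill (.leaf i) := (t.graft_leaf_self i).symm.trans (hc _)
  have hnc : n ∉ c.labels := Finset.notMem_mono (fun a ha => ht.labels_subset
    (by rw [htc, c.labels_fill]; exact Finset.mem_union_right _ ha)) hn
  have hni : n ≠ i := (ne_of_mem_of_not_mem hi hn).symm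
  refine ⟨c.poly {i, n} * forestPoly F, ?_, ?_⟩
  · rw [Finset.image_insert, ht.image_splitLeaf_of_mem hit,
      forestPoly_insert (ht.splitLeaf hit hn).notMem, PTree.splitLeaf, hc, treePoly_fill,
      PTree.labels_node, PTree.labels_leaf, PTree.labels_leaf, treePoly, treePoly, treePoly,
      PTree.labels_leaf, PTree.labels_leaf, mul_one, one_mul, mul_assoc]
    rfl
  · rw [map_mul, restrictVars_edgesAvoiding_ctxPoly hnc, Finset.pair_comm,
      Finset.erase_insert (by simpa using hni), forestPoly_insert ht.notMem,
      restrictVars_edgesAvoiding_forestPoly ht.rest (Finset.notMem_mono Finset.sdiff_subset hn),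
      htc, treePoly_fill, PTree.labels_leaf, treePoly, one_mul]

lemma restrictVars_edgesAvoiding_splitForm_singleton (i : ℕ) :
    restrictVars ℤ (edgesAvoiding n) (splitForm {i} {n}) = 0 := by
  rw [restrictVars_edgesAvoiding_splitForm, Finset.erase_singleton]
  simp [splitForm]

lemma pderiv_splitForm_singleton (hi : i ≠ n) :
    pderiv (n, j) (splitForm {i} {n}) = if j = i then 1 else 0 := by
  rw [pderiv_splitForm, coeff_splitForm]
  by_cases hj : j = i <;> simp [hj, hi.symm]

lemma coeff_restrictVars_edgesAvoiding (hE : IsDiagOn n E) (P : MvPolynomial (ℕ × ℕ) ℤ) :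
    coeff (Multiset.toFinsupp E) (restrictVars ℤ (edgesAvoiding n) P) =
      coeff (Multiset.toFinsupp E) P := by
  refine coeff_restrictVars (fun e he => ?_) P
  have he := hE e (by simpa using he)
  exact ⟨he.1.ne, he.2.1.ne⟩

lemma pairDF_image_splitLeaf (hE : IsDiagOn n E) (hF : IsForestOn n F) (hi : i < n) :
    pairDF E (F.image (PTree.splitLeaf i n)) = 0 := by
  rw [isForestOn_iff_isForestWith] at hF
  have hn : n ∉ Finset.range n := Finset.notMem_range_self
  obtain ⟨Q, hQ, -⟩ := exists_forestPoly_image_splitLeaf hF (Finset.mem_range.2 hi) hn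
  rw [pairDF_eq_coeff_forestPoly (hF.image_splitLeaf (Finset.mem_range.2 hi) hn),
    ← coeff_restrictVars_edgesAvoiding hE, hQ, map_mul,
    restrictVars_edgesAvoiding_splitForm_singleton, zero_mul, coeff_zero]

lemma pairDF_cons_image_splitLeaf (hE : IsDiagOn n E) (hF : IsForestOn n F) (hi : i < n) :
    pairDF ((n, j) ::ₘ E) (F.image (PTree.splitLeaf i n)) = if j = i then pairDF E F else 0 := by
  rw [isForestOn_iff_isForestWith] at hF
  have hn : n ∉ Finset.range n := Finset.notMem_range_self
  obtain ⟨Q, hQ, hQF⟩ := exists_forestPoly_image_splitLeaf hF (Finset.mem_range.2 hi) hn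
  have himage := hF.image_splitLeaf (Finset.mem_range.2 hi) hn
  rw [pairDF_eq_coeff_forestPoly himage, pairDF_eq_coeff_forestPoly hF,
    (isArnold_forestPoly himage).isMultiaffine.coeff_cons, ← coeff_restrictVars_edgesAvoiding hE,
    hQ, pderiv_mul, map_add, map_mul, map_mul, restrictVars_edgesAvoiding_splitForm_singleton,
    zero_mul, add_zero, hQF, pderiv_splitForm_singleton hi.ne]
  split_ifs <;> simp

lemma pairDF_insert_leaf (hF : IsForestOn n F) :
    pairDF E (insert (.leaf n) F) = pairDF E F := by
  rw [isForestOn_iff_isForestWith] at hF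
  have hinsert := hF.isForestInsert_leaf Finset.notMem_range_self
  rw [pairDF_eq_coeff_forestPoly hinsert.isForestWith, pairDF_eq_coeff_forestPoly hF,
    forestPoly_insert hinsert.notMem, treePoly, one_mul]

lemma pairDF_cons_eq_zero (hF : IsForestOn n F) : pairDF ((n, j) ::ₘ E) F = 0 := by
  rw [isForestOn_iff_isForestWith] at hF
  have hpoly := isArnold_forestPoly hF
  rw [pairDF_eq_coeff_forestPoly hF, hpoly.isMultiaffine.coeff_cons,
    hpoly.pderiv_eq_zero (by simp), coeff_zero]

lemma pairDF_extendDiag_extendForest (hE : IsDiagOn n E) (hF : IsForestOn n F)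
    (o o' : Option (Fin n)) :
    pairDF (extendDiag n o E) (extendForest n o' F) = if o = o' then pairDF E F else 0 := by
  cases o with
  | none => cases o' with
    | none => exact pairDF_insert_leaf hF
    | some i => exact pairDF_image_splitLeaf hE hF i.2
  | some j => cases o' with
    | none => exact (pairDF_insert_leaf hF).trans (pairDF_cons_eq_zero hF)
    | some i =>
      simp only [Option.some.injEq, Fin.ext_iff]
      exact pairDF_cons_image_splitLeaf hE hF i.2

lemma span_range_apply_eq_top {R M N ι κ : Type*} [Semiring R] [AddCommMonoid M]
    [AddCommMonoid N] [Module R M] [Module R N] {f : κ → M →ₗ[R] N} {v : ι → M}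
    (hv : Submodule.span R (Set.range v) = ⊤) (hf : ⨆ o, LinearMap.range (f o) = ⊤) :
    Submodule.span R (Set.range fun x : ι × κ => f x.2 (v x.1)) = ⊤ := by
  rw [eq_top_iff, ← hf]
  refine iSup_le fun o => ?_
  rw [LinearMap.range_eq_map, ← hv, Submodule.map_span_le]
  rintro _ ⟨i, rfl⟩
  exact Submodule.subset_span ⟨(i, o), rfl⟩

variable (R : Type) [CommRing R]

lemma span_diagClass_zero : Submodule.span R {diagClass R 0 0} = ⊤ := by
  rw [eq_top_iff, ← span_diagClass, Submodule.span_le]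
  rintro _ ⟨E, rfl⟩
  have hE : E.1 = 0 := Multiset.eq_zero_of_forall_notMem fun e he => Nat.not_lt_zero _ (E.2 e he).1
  exact Submodule.subset_span (congrArg (diagClass R 0) hE)

lemma span_forestClass_zero : Submodule.span R {forestClass R 0 ∅} = ⊤ := by
  rw [eq_top_iff, ← span_forestClass, Submodule.span_le]
  rintro _ ⟨F, rfl⟩
  have hF : F.1 = ∅ := Finset.eq_empty_of_forall_notMem fun t ht =>
    t.labels_nonempty.ne_empty <| Finset.subset_empty.1 <|
      (isForestOn_iff_isForestWith.1 F.2).labels_subset ht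
  exact Submodule.subset_span (congrArg (forestClass R 0) hF)

lemma exists_dual_families (n : ℕ) :
    ∃ (ι : Type) (_ : Finite ι) (D : ι → DiagOn n) (F : ι → ForestOn n),
      Submodule.span R (Set.range fun i => diagClass R n (D i).1) = ⊤ ∧
      Submodule.span R (Set.range fun i => forestClass R n (F i).1) = ⊤ ∧
      ∀ i j, pairDF (D i).1 (F j).1 = if i = j then 1 else 0 := by
  induction n with
  | zero =>
    have hF : IsForestWith (Finset.range 0) ∅ := ⟨by simp, by simp, by simp⟩
    refine ⟨Unit, inferInstance, fun _ => (isDiagOn_zero 0).toDiagOn,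
      fun _ => (isForestOn_iff_isForestWith.2 hF).toForestOn, ?_, ?_, fun _ _ => ?_⟩
    · rw [Set.range_const]
      exact span_diagClass_zero R
    · rw [Set.range_const]
      exact span_forestClass_zero R
    · rw [if_pos rfl]
      refine (pairDF_eq_coeff_forestPoly hF 0).trans ?_
      simp [forestPoly]
  | succ n ih =>
    obtain ⟨ι, _, D, F, hD, hF, hpair⟩ := ih
    refine ⟨ι × Option (Fin n), inferInstance, fun x => ((D x.1).2.extendDiag x.2).toDiagOn,
      fun x => ((F x.1).2.extendForest x.2).toForestOn, ?_, ?_, fun x y => ?_⟩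
    · rw [← span_range_apply_eq_top hD (iSup_range_siopExtend R)]
      simp only [siopExtend_diagClass R (D _).2]; rfl
    · rw [← span_range_apply_eq_top hF (iSup_range_poisExtend R)]
      simp only [poisExtend_forestClass R (F _).2]; rfl
    · refine (pairDF_extendDiag_extendForest (D x.1).2 (F y.1).2 x.2 y.2).trans ?_
      simp only [hpair, Prod.ext_iff, ← ite_and, and_comm]

end Duality

section DualFamilies

variable {R M N ι : Type*} [CommRing R] [AddCommGroup M] [AddCommGroup N] [Module R M] [Module R N]
  {p : M →ₗ[R] N →ₗ[R] R} {v : ι → M} {w : ι → N}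

lemma eq_sum_smul_of_dual [Fintype ι] (hv : Submodule.span R (Set.range v) = ⊤)
    (hvw : ∀ i j, p (v i) (w j) = if i = j then 1 else 0) (y : M) : y = ∑ i, p y (w i) • v i := by
  obtain ⟨c, rfl⟩ := (Submodule.mem_span_range_iff_exists_fun R).1 (hv ▸ Submodule.mem_top (x := y))
  simp [LinearMap.sum_apply, hvw]

lemma bijective_of_eq_sum_smul [Fintype ι] (hv : ∀ y, y = ∑ i, p y (w i) • v i)
    (hw : ∀ x, x = ∑ i, p (v i) x • w i) : Function.Bijective p := by
  refine ⟨LinearMap.ker_eq_bot.1 (LinearMap.ker_eq_bot'.2 fun y hy => ?_), fun f => ?_⟩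
  · rw [hv y, hy]
    simp
  · refine ⟨∑ i, f (w i) • v i, LinearMap.ext fun x => ?_⟩
    conv_rhs => rw [hw x]
    simp [LinearMap.sum_apply, mul_comm]

variable {κ : Type*} {deg : ι → κ} {𝓜 : κ → Submodule R M} {𝓝 : κ → Submodule R N}

lemma eq_sum_smul_of_dual_graded [Fintype ι] (hv : Submodule.span R (Set.range v) = ⊤)
    (hvw : ∀ i j, p (v i) (w j) = if i = j then 1 else 0)
    (hvdeg : ∀ k i, deg i = k → v i ∈ 𝓜 k) (hwdeg : ∀ k i, deg i = k → w i ∈ 𝓝 k)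
    (horth : ∀ k l, k ≠ l → ∀ y ∈ 𝓜 k, ∀ x ∈ 𝓝 l, p y x = 0) (k : κ) (y : 𝓜 k) :
    y = ∑ i : {i // deg i = k}, p y (w i) • (⟨v i, hvdeg k i i.2⟩ : 𝓜 k) := by
  apply Subtype.ext
  have hsupp (i : ι) (hi : p y (w i) • v i ≠ 0) : deg i = k := by
    by_contra hik
    exact hi (by rw [horth k (deg i) (Ne.symm hik) y y.2 (w i) (hwdeg _ i rfl), zero_smul])
  rw [AddSubmonoidClass.coe_finsetSum]
  refine (eq_sum_smul_of_dual hv hvw (y : M)).trans ?_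
  rw [← Finset.sum_filter_of_ne fun i _ => hsupp i]
  exact Finset.sum_subtype _ (by simp) _

lemma bijective_domRestrict₁₂_of_dual [Finite ι] (hv : Submodule.span R (Set.range v) = ⊤)
    (hw : Submodule.span R (Set.range w) = ⊤)
    (hvw : ∀ i j, p (v i) (w j) = if i = j then 1 else 0)
    (hvdeg : ∀ k i, deg i = k → v i ∈ 𝓜 k) (hwdeg : ∀ k i, deg i = k → w i ∈ 𝓝 k)
    (horth : ∀ k l, k ≠ l → ∀ y ∈ 𝓜 k, ∀ x ∈ 𝓝 l, p y x = 0) (k : κ) :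
    Function.Bijective (p.domRestrict₁₂ (𝓜 k) (𝓝 k)) := by
  have := Fintype.ofFinite ι
  exact bijective_of_eq_sum_smul
    (v := fun i : {i // deg i = k} => (⟨v i, hvdeg k i i.2⟩ : 𝓜 k))
    (w := fun i : {i // deg i = k} => (⟨w i, hwdeg k i i.2⟩ : 𝓝 k))
    (eq_sum_smul_of_dual_graded hv hvw hvdeg hwdeg horth k)
    (eq_sum_smul_of_dual_graded (p := p.flip) hw (fun i j => by simp [hvw, eq_comm]) hwdeg hvdeg
      (fun k l hkl x hx y hy => horth l k hkl.symm y hy x hx) k)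

end DualFamilies

section Grading

variable (R : Type) [CommRing R] {n : ℕ}

lemma poisK_eq_span (k : ℕ) : PoisK R n k =
    Submodule.span R {x | ∃ F : ForestOn n, forestDeg F.1 = k ∧ x = forestClass R n F.1} := by
  rw [PoisK, PhiK, Submodule.map_span]
  congr 1
  ext x
  constructor
  · rintro ⟨_, ⟨F, hF, rfl⟩, rfl⟩
    exact ⟨F, hF, (forestClass_of_isForestOn F.2).symm⟩
  · rintro ⟨F, hF, rfl⟩
    exact ⟨_, ⟨F, hF, rfl⟩, (forestClass_of_isForestOn F.2).symm⟩

lemma siopK_eq_span (k : ℕ) : SiopK R n k =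
    Submodule.span R {y | ∃ E : DiagOn n, E.1.card = k ∧ y = diagClass R n E.1} := by
  rw [SiopK, DeltaK, Submodule.map_span]
  congr 1
  ext y
  constructor
  · rintro ⟨_, ⟨E, hE, rfl⟩, rfl⟩
    exact ⟨E, hE, (diagClass_of_isDiagOn E.2).symm⟩
  · rintro ⟨E, hE, rfl⟩
    exact ⟨_, ⟨E, hE, rfl⟩, (diagClass_of_isDiagOn E.2).symm⟩

lemma forestClass_mem_poisK (F : ForestOn n) :
    forestClass R n F.1 ∈ PoisK R n (forestDeg F.1) :=
  poisK_eq_span R _ ▸ Submodule.subset_span ⟨F, rfl, rfl⟩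

lemma diagClass_mem_siopK (E : DiagOn n) : diagClass R n E.1 ∈ SiopK R n E.1.card :=
  siopK_eq_span R _ ▸ Submodule.subset_span ⟨E, rfl, rfl⟩

lemma pairing_eq_zero_of_ne {k l : ℕ} (hkl : k ≠ l) {y : SiopQ R n} (hy : y ∈ SiopK R n k)
    {x : PoisQ R n} (hx : x ∈ PoisK R n l) : pairing R n y x = 0 := by
  rw [siopK_eq_span] at hy
  rw [poisK_eq_span] at hx
  induction hy, hx using Submodule.span_induction₂ with
  | mem_mem y x hy hx =>
    obtain ⟨E, rfl, rfl⟩ := hy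
    obtain ⟨F, rfl, rfl⟩ := hx
    rw [pairing_diagClass_forestClass E.2 F.2]
    by_contra h
    exact hkl (card_eq_forestDeg_of_pairDF_ne_zero (isForestOn_iff_isForestWith.1 F.2)
      fun h' => h (by rw [h', Int.cast_zero]))
  | zero_left | zero_right => simp
  | add_left _ _ _ _ _ _ h h' => rw [map_add, LinearMap.add_apply, h, h', add_zero]
  | add_right _ _ _ _ _ _ h h' => rw [map_add, h, h', add_zero]
  | smul_left _ _ _ _ _ h => rw [map_smul, LinearMap.smul_apply, h, smul_zero]
  | smul_right _ _ _ _ _ h => rw [map_smul, h, smul_zero]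

end Grading

end GTPairing

namespace GTPairing

/-- the configuration pairing between `Φ_n` and `Δ_n` descends to a
pairing between `Pois(n)` and `Siop(n)` which restricts, for every `k`, to a perfect
pairing between `Pois_k(n)` and `Siop_k(n)`. -/
theorem perfect_pairing_Pois_Siop (R : Type) [CommRing R] (n : ℕ) :
    ∃ p : SiopQ R n →ₗ[R] PoisQ R n →ₗ[R] R,
      (∀ (y : DeltaF R n) (x : PhiF R n),
        p (Submodule.Quotient.mk y) (Submodule.Quotient.mk x) = pairDFF y x) ∧
      ∀ k : ℕ,
        Function.Bijective (p.domRestrict₁₂ (SiopK R n k) (PoisK R n k)) ∧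
        Function.Bijective (p.flip.domRestrict₁₂ (PoisK R n k) (SiopK R n k)) := by
  obtain ⟨ι, _, D, F, hD, hF, hDF⟩ := exists_dual_families R n
  have hpair (i j : ι) :
      pairing R n (diagClass R n (D i).1) (forestClass R n (F j).1) = if i = j then 1 else 0 := by
    rw [pairing_diagClass_forestClass (D i).2 (F j).2, hDF]
    split_ifs <;> simp
  have hdeg (i : ι) : (D i).1.card = forestDeg (F i).1 :=
    card_eq_forestDeg_of_pairDF_ne_zero (isForestOn_iff_isForestWith.1 (F i).2) (by simp [hDF])
  have hDdeg (k : ℕ) (i : ι) (h : (D i).1.card = k) : diagClass R n (D i).1 ∈ SiopK R n k :=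
    h ▸ diagClass_mem_siopK R (D i)
  have hFdeg (k : ℕ) (i : ι) (h : (D i).1.card = k) : forestClass R n (F i).1 ∈ PoisK R n k :=
    h ▸ hdeg i ▸ forestClass_mem_poisK R (F i)
  refine ⟨pairing R n, pairing_mk_mk, fun k => ⟨?_, ?_⟩⟩
  · exact bijective_domRestrict₁₂_of_dual hD hF hpair hDdeg hFdeg
      (fun k l hkl y hy x hx => pairing_eq_zero_of_ne R hkl hy hx) k
  · exact bijective_domRestrict₁₂_of_dual hF hD (by simp [hpair, eq_comm]) hFdeg hDdeg
      (fun k l hkl x hx y hy => pairing_eq_zero_of_ne R hkl.symm hy hx) k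

end GTPairing
end
end

section
/- Let B be a bracket expression containing a sub-expression [X, Y·Z], let B' be obtained from B by substituting Y·[X,Z] for [X, Y·Z], and let B'' be obtained by substituting [X,Y]·Z. Then for every Diagram D, ⟨D, B⟩ = ⟨D, B'⟩ + ⟨D, B''⟩; that is, the configuration pairing on bracket expressions respects the Leibniz rule. -/
open scoped Classical

noncomputable section

namespace GTPairing

/-- Formal bracket expressions in variables `x_a`, built from a binary bracket `[,]`
(`br`) and a binary product `·` (`mul`). -/
inductive BExpr : Type
  | var (a : ℕ) : BExpr
  | br (x y : BExpr) : BExpr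
  | mul (x y : BExpr) : BExpr
  deriving DecidableEq

namespace BExpr

/-- The variables occurring in a bracket expression, in left-to-right order. -/
def varsL : BExpr → List ℕ
  | .var a => [a]
  | .br x y => x.varsL ++ y.varsL
  | .mul x y => x.varsL ++ y.varsL

/-- The bracket pairs of a bracket expression (as the subexpressions they enclose), in
left-to-right order. -/
def brList : BExpr → List BExpr
  | .var _ => []
  | .br x y => x.brList ++ (BExpr.br x y :: y.brList)
  | .mul x y => x.brList ++ y.brList

/-- `bnadir B i j` is the innermost pair of brackets of `B` containing both `x_i` and
`x_j`, when `x_i` and `x_j` are bracketed together before being multiplied (otherwise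
`β` is undefined at this pair, yielding `none`); the Boolean records whether `x_i`
appears to the left of `x_j`. -/
def bnadir : BExpr → ℕ → ℕ → Option (BExpr × Bool)
  | .var _, _, _ => none
  | .br x y, i, j =>
    if i ∈ x.varsL ∧ j ∈ y.varsL then some (.br x y, true)
    else if j ∈ x.varsL ∧ i ∈ y.varsL then some (.br x y, false)
    else if i ∈ x.varsL ∧ j ∈ x.varsL then x.bnadir i j
    else if i ∈ y.varsL ∧ j ∈ y.varsL then y.bnadir i j
    else none
  | .mul x y, i, j =>
    if i ∈ x.varsL ∧ j ∈ x.varsL then x.bnadir i j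
    else if i ∈ y.varsL ∧ j ∈ y.varsL then y.bnadir i j
    else none

end BExpr

/-- The configuration pairing between a Diagram (a multiset of oriented edges) and a
bracket expression: `0` unless `β_{D,B}` is defined on every edge and is a bijection
onto the bracket pairs of `B`, in which case it is `(-1)^k` where `k` is the number of
edges `i → j` for which `x_j` appears to the left of `x_i`. -/
def pairDB (E : Multiset (ℕ × ℕ)) (B : BExpr) : ℤ :=
  if E.map (fun e => (B.bnadir e.1 e.2).map Prod.fst)
      = ((B.brList.map some : List (Option BExpr)) : Multiset (Option BExpr))
  then (-1) ^ (Multiset.card (E.filter fun e => (B.bnadir e.1 e.2).map Prod.snd = some false))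
  else 0

/-- One-hole contexts for bracket expressions. -/
inductive BCtx : Type
  | hole : BCtx
  | brL (c : BCtx) (y : BExpr) : BCtx
  | brR (x : BExpr) (c : BCtx) : BCtx
  | mulL (c : BCtx) (y : BExpr) : BCtx
  | mulR (x : BExpr) (c : BCtx) : BCtx

/-- Filling the hole of a context with a bracket expression. -/
def BCtx.fill : BCtx → BExpr → BExpr
  | .hole, e => e
  | .brL c y, e => .br (c.fill e) y
  | .brR x c, e => .br x (c.fill e)
  | .mulL c y, e => .mul (c.fill e) y
  | .mulR x c, e => .mul x (c.fill e)

/-- A bracket expression on `{0,…,n-1}`, each variable used exactly once. -/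
def IsBExprOn (n : ℕ) (B : BExpr) : Prop :=
  B.varsL.Nodup ∧ B.varsL.toFinset = Finset.range n

def BExprOn (n : ℕ) : Type := {B : BExpr // IsBExprOn n B}

variable (R : Type) [CommRing R]

/-- The free module on bracket expressions in `x_1,…,x_n`, each variable used once. -/
abbrev BExprF (n : ℕ) : Type := BExprOn n →₀ R

/-- The relations on bracket expressions: antisymmetry and the Jacobi identity for the
bracket, commutativity of the product, and the Leibniz rule, each applied inside an
arbitrary context. -/
def brelSet (n : ℕ) : Set (BExprF R n) :=
  { x | ∃ (c : BCtx) (X Y : BExpr) (B₁ B₂ : BExprOn n),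
      B₁.1 = c.fill (.br X Y) ∧ B₂.1 = c.fill (.br Y X) ∧
      x = Finsupp.single B₁ 1 + Finsupp.single B₂ 1 } ∪
  { x | ∃ (c : BCtx) (X Y Z : BExpr) (B₁ B₂ B₃ : BExprOn n),
      B₁.1 = c.fill (.br (.br X Y) Z) ∧ B₂.1 = c.fill (.br (.br Y Z) X) ∧
      B₃.1 = c.fill (.br (.br Z X) Y) ∧
      x = Finsupp.single B₁ 1 + Finsupp.single B₂ 1 + Finsupp.single B₃ 1 } ∪
  { x | ∃ (c : BCtx) (X Y : BExpr) (B₁ B₂ : BExprOn n),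
      B₁.1 = c.fill (.mul X Y) ∧ B₂.1 = c.fill (.mul Y X) ∧
      x = Finsupp.single B₁ 1 - Finsupp.single B₂ 1 } ∪
  { x | ∃ (c : BCtx) (X Y Z : BExpr) (B₁ B₂ B₃ : BExprOn n),
      B₁.1 = c.fill (.br X (.mul Y Z)) ∧ B₂.1 = c.fill (.mul (.br X Y) Z) ∧
      B₃.1 = c.fill (.mul Y (.br X Z)) ∧
      x = Finsupp.single B₁ 1 - Finsupp.single B₂ 1 - Finsupp.single B₃ 1 }

/-- The submodule of relations among bracket expressions. -/
def Brel (n : ℕ) : Submodule R (BExprF R n) := Submodule.span R (brelSet R n)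

end GTPairing

namespace GTPairing

/-!
Attach to each bracket `[x, y]` of `B` the linear form `∑ X_(i,j) - X_(j,i)`, summed over `i` in `x`
and `j` in `y`, and multiply these forms over all brackets of `B`. An edge occurs in the form of at
most one bracket, the one that `β` assigns to it, so the coefficient of the product at the monomial
of a Diagram `D` is `⟨D, B⟩`: a term of the product chooses one edge for every bracket.

The form of `[X, Y·Z]` is the sum of those of `[X, Y]` and `[X, Z]`, while the forms of the
surrounding brackets depend only on the set of variables in each half. Hence the Leibniz rule
already holds for the polynomials.
-/

section LinearForms

open MvPolynomial

variable {σ κ R : Type*} [DecidableEq σ] [CommSemiring R]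

theorem toFinsupp_erase (E : Multiset σ) (a : σ) :
    (E.erase a).toFinsupp = E.toFinsupp - Finsupp.single a 1 := by
  ext b
  rcases eq_or_ne b a with rfl | hba
  · simp
  · simp [hba, Multiset.count_erase_of_ne hba]

theorem map_erase_eq_iff {τ : Type*} {β : σ → τ} {E : Multiset σ} {M : Multiset τ} {a : σ}
    (ha : a ∈ E) : (E.erase a).map β = M ↔ E.map β = β a ::ₘ M := by
  conv_rhs => rw [← Multiset.cons_erase ha, Multiset.map_cons, Multiset.cons_inj_right]

theorem coeff_linearCombination_X_mul (w : σ →₀ R) (P : MvPolynomial σ R) (E : Multiset σ) :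
    coeff E.toFinsupp (Finsupp.linearCombination R X w * P) =
      ∑ a ∈ E.toFinset, w a * coeff (E.erase a).toFinsupp P := by
  induction w using Finsupp.induction_linear with
  | zero => simp
  | add v w hv hw =>
    simp only [map_add, add_mul, coeff_add, hv, hw, Finsupp.add_apply, Finset.sum_add_distrib]
  | single b r => simp [coeff_X_mul', toFinsupp_erase, Finsupp.single_apply, ite_mul]

theorem coeff_prod_linearCombination_X [DecidableEq κ] {β : σ → Option κ} {s : σ → R}
    {w : κ → σ →₀ R} {L : List κ} (hL : L.Nodup)
    (hw : ∀ k ∈ L, ∀ a, w k a = if β a = some k then s a else 0) (E : Multiset σ) :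
    coeff E.toFinsupp (L.map fun k => Finsupp.linearCombination R X (w k)).prod =
      if E.map β = (L.map some : List (Option κ)) then (E.map s).prod else 0 := by
  induction L generalizing E with
  | nil =>
    rcases eq_or_ne E 0 with rfl | hE
    · simp
    · simp [coeff_one, hE, eq_comm (a := (0 : σ →₀ ℕ))]
  | cons k L ih =>
    obtain ⟨hk, hL⟩ := List.nodup_cons.1 hL
    rw [List.map_cons, List.prod_cons, coeff_linearCombination_X_mul]
    simp only [ih hL fun l hl => hw l (List.mem_cons_of_mem k hl), hw k List.mem_cons_self]
    rw [List.map_cons, ← Multiset.cons_coe]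
    split_ifs with hE
    · obtain ⟨a, ha, hak⟩ : ∃ a ∈ E, β a = some k := by
        rw [← Multiset.mem_map, hE]
        exact Multiset.mem_cons_self ..
      have hEa : (E.erase a).map β = (L.map some : List (Option κ)) := by
        rwa [map_erase_eq_iff ha, hak]
      have unique : ∀ b ∈ E, b ≠ a → β b ≠ some k := by
        intro b hb hba hbk
        have : some k ∈ (E.erase a).map β :=
          Multiset.mem_map.2 ⟨b, (Multiset.mem_erase_of_ne hba).2 hb, hbk⟩
        simp [hEa, hk] at this
      rw [Finset.sum_eq_single_of_mem a (Multiset.mem_toFinset.2 ha), if_pos hak, if_pos hEa,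
        Multiset.prod_map_erase ha]
      intro b hb hba
      rw [if_neg (unique b (Multiset.mem_toFinset.1 hb) hba), zero_mul]
    · refine Finset.sum_eq_zero fun a ha => ?_
      split_ifs with hak hEa
      · rw [map_erase_eq_iff (Multiset.mem_toFinset.1 ha), hak] at hEa
        exact absurd hEa hE
      all_goals simp only [mul_zero, zero_mul]

end LinearForms

/-- The signed number of ways in which an ordered pair leads from `s` to `t`: `(i, j)` gets weight
`1` if `i` lies in `s` and `j` in `t`, and weight `-1` if it is the other way round. Counting with
multiplicity makes the weight biadditive. -/
def crossing {α : Type*} (s t : Multiset α) : α × α →₀ ℤ :=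
  Finsupp.onFinset ((s + t).toFinset ×ˢ (s + t).toFinset)
    (fun e => s.count e.1 * t.count e.2 - s.count e.2 * t.count e.1) fun e he => by
      simp only [Finset.mem_product, Multiset.mem_toFinset, ← Multiset.one_le_count_iff_mem,
        Multiset.count_add]
      grind

section Crossing

variable {α : Type*}

theorem crossing_apply (s t : Multiset α) (e : α × α) :
    crossing s t e = s.count e.1 * t.count e.2 - s.count e.2 * t.count e.1 := rfl

theorem crossing_add_right (s t u : Multiset α) :
    crossing s (t + u) = crossing s t + crossing s u := by
  ext e
  simp only [crossing_apply, Finsupp.add_apply, Multiset.count_add]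
  push_cast
  ring

theorem crossing_apply_of_nodup {s t : Multiset α} (h : (s + t).Nodup) (e : α × α) :
    crossing s t e =
      if e.1 ∈ s ∧ e.2 ∈ t then 1 else if e.2 ∈ s ∧ e.1 ∈ t then -1 else 0 := by
  obtain ⟨hs, ht, hst⟩ := Multiset.nodup_add.1 h
  have := @Multiset.disjoint_left _ s t
  simp only [crossing_apply, Multiset.count_eq_of_nodup hs, Multiset.count_eq_of_nodup ht]
  grind

end Crossing

namespace BExpr

theorem varsL_ne_nil (B : BExpr) : B.varsL ≠ [] := by
  induction B <;> simp_all [varsL]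

theorem exists_eq_br_of_mem_brList {B b : BExpr} (hb : b ∈ B.brList) : ∃ x y, b = br x y := by
  induction B <;> grind [brList]

theorem varsL_sublist_of_mem_brList {B b : BExpr} (hb : b ∈ B.brList) :
    b.varsL.Sublist B.varsL := by
  induction B with
  | var a => simp [brList] at hb
  | br x y ihx ihy =>
    simp only [brList, List.mem_append, List.mem_cons] at hb
    rcases hb with hb | rfl | hb
    · exact (ihx hb).trans (List.sublist_append_left ..)
    · exact List.Sublist.refl _
    · exact (ihy hb).trans (List.sublist_append_right ..)
  | mul x y ihx ihy =>
    rcases List.mem_append.1 hb with hb | hb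
    · exact (ihx hb).trans (List.sublist_append_left ..)
    · exact (ihy hb).trans (List.sublist_append_right ..)

theorem mem_varsL_of_mem_brList {B b : BExpr} (hb : b ∈ B.brList) {i : ℕ} (hi : i ∈ b.varsL) :
    i ∈ B.varsL :=
  (varsL_sublist_of_mem_brList hb).mem hi

theorem disjoint_brList {x y : BExpr} (h : x.varsL.Disjoint y.varsL) :
    x.brList.Disjoint y.brList := by
  intro b hx hy
  obtain ⟨i, hi⟩ := List.exists_mem_of_ne_nil _ b.varsL_ne_nil
  exact h (mem_varsL_of_mem_brList hx hi) (mem_varsL_of_mem_brList hy hi)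

theorem brList_nodup {B : BExpr} (hB : B.varsL.Nodup) : B.brList.Nodup := by
  induction B with
  | var a => simp [brList]
  | br x y ihx ihy =>
    obtain ⟨hx, hy, hxy⟩ := List.nodup_append'.1 hB
    obtain ⟨i, hi⟩ := List.exists_mem_of_ne_nil _ x.varsL_ne_nil
    obtain ⟨j, hj⟩ := List.exists_mem_of_ne_nil _ y.varsL_ne_nil
    have notMem_left : br x y ∉ x.brList := fun h =>
      hxy (mem_varsL_of_mem_brList h (List.mem_append_right _ hj)) hj
    have notMem_right : br x y ∉ y.brList := fun h =>
      hxy hi (mem_varsL_of_mem_brList h (List.mem_append_left _ hi))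
    exact List.nodup_append'.2 ⟨ihx hx, List.nodup_cons.2 ⟨notMem_right, ihy hy⟩,
      List.disjoint_cons_right.2 ⟨notMem_left, disjoint_brList hxy⟩⟩
  | mul x y ihx ihy =>
    obtain ⟨hx, hy, hxy⟩ := List.nodup_append'.1 hB
    exact List.nodup_append'.2 ⟨ihx hx, ihy hy, disjoint_brList hxy⟩

theorem bnadir_eq_some_true_iff {B : BExpr} (hB : B.varsL.Nodup) {x y : BExpr} {i j : ℕ} :
    B.bnadir i j = some (br x y, true) ↔ br x y ∈ B.brList ∧ i ∈ x.varsL ∧ j ∈ y.varsL := by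
  have mem_varsL {C : BExpr} {k : ℕ} (h : br x y ∈ C.brList) (hk : k ∈ x.varsL ∨ k ∈ y.varsL) :
      k ∈ C.varsL := mem_varsL_of_mem_brList h (List.mem_append.2 hk)
  induction B with
  | var a => simp [bnadir, brList]
  | br u v ihu ihv | mul u v ihu ihv =>
    obtain ⟨hu, hv, huv⟩ := List.nodup_append'.1 hB
    have notMem_right {k : ℕ} (hk : k ∈ u.varsL) : k ∉ v.varsL := fun hk' => huv hk hk'
    specialize ihu hu
    specialize ihv hv
    grind [bnadir, brList]

theorem bnadir_swap {B : BExpr} (hB : B.varsL.Nodup) (i j : ℕ) :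
    B.bnadir j i = (B.bnadir i j).map (Prod.map id not) := by
  induction B with
  | var a => rfl
  | br u v ihu ihv | mul u v ihu ihv =>
    obtain ⟨hu, hv, huv⟩ := List.nodup_append'.1 hB
    have notMem_right {k : ℕ} (hk : k ∈ u.varsL) : k ∉ v.varsL := fun hk' => huv hk hk'
    specialize ihu hu
    specialize ihv hv
    grind [bnadir]

theorem bnadir_eq_some_false_iff {B : BExpr} (hB : B.varsL.Nodup) {x y : BExpr} {i j : ℕ} :
    B.bnadir i j = some (br x y, false) ↔ br x y ∈ B.brList ∧ j ∈ x.varsL ∧ i ∈ y.varsL := by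
  rw [← bnadir_eq_some_true_iff hB, bnadir_swap hB i j]
  simp [Prod.exists]

/-- The weight with which an edge crosses from the left to the right half of a bracket. The value
`0` on expressions that are not brackets is never used. -/
def bracketWeight : BExpr → ℕ × ℕ →₀ ℤ
  | br x y => crossing x.varsL y.varsL
  | _ => 0

/-- The generating polynomial of the pairings with `B`, having one variable per oriented edge and
one linear factor per bracket of `B`. A Diagram, possibly with repeated edges, is encoded by the
monomial that is the product of its edges. -/
def bracketPoly (B : BExpr) : MvPolynomial (ℕ × ℕ) ℤ :=
  (B.brList.map fun b => Finsupp.linearCombination ℤ MvPolynomial.X b.bracketWeight).prod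

/-- The sign of an edge `i → j` in the pairing with `B`: `-1` if `x_j` appears to the left of `x_i`
in the bracket assigned to the edge. An edge that is assigned no bracket has sign `1`. -/
def edgeSign (B : BExpr) (e : ℕ × ℕ) : ℤ :=
  if (B.bnadir e.1 e.2).map Prod.snd = some false then -1 else 1

theorem bracketWeight_apply {B b : BExpr} (hB : B.varsL.Nodup) (hb : b ∈ B.brList)
    (e : ℕ × ℕ) :
    b.bracketWeight e =
      if (B.bnadir e.1 e.2).map Prod.fst = some b then B.edgeSign e else 0 := by
  obtain ⟨x, y, rfl⟩ := exists_eq_br_of_mem_brList hb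
  have hxy : (x.varsL + y.varsL : Multiset ℕ).Nodup := (varsL_sublist_of_mem_brList hb).nodup hB
  have forward := bnadir_eq_some_true_iff hB (x := x) (y := y) (i := e.1) (j := e.2)
  have backward := bnadir_eq_some_false_iff hB (x := x) (y := y) (i := e.1) (j := e.2)
  rw [bracketWeight, crossing_apply_of_nodup hxy]
  simp only [hb, true_and] at forward backward
  simp only [Multiset.mem_coe, ← forward, ← backward, edgeSign]
  rcases B.bnadir e.1 e.2 with _ | ⟨b, _ | _⟩ <;> simp

theorem prod_map_edgeSign (B : BExpr) (E : Multiset (ℕ × ℕ)) :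
    (E.map B.edgeSign).prod =
      (-1) ^ (E.filter fun e => (B.bnadir e.1 e.2).map Prod.snd = some false).card := by
  induction E using Multiset.induction with
  | empty => rfl
  | cons e E ih =>
    rw [Multiset.map_cons, Multiset.prod_cons, ih, edgeSign, Multiset.filter_cons]
    split_ifs <;> simp [pow_succ']

theorem coeff_bracketPoly {B : BExpr} (hB : B.varsL.Nodup) (E : Multiset (ℕ × ℕ)) :
    MvPolynomial.coeff E.toFinsupp B.bracketPoly = pairDB E B := by
  rw [pairDB, ← prod_map_edgeSign]
  exact coeff_prod_linearCombination_X (brList_nodup hB)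
    (fun _ hb e => bracketWeight_apply hB hb e) E

theorem bracketPoly_mul (x y : BExpr) :
    (mul x y).bracketPoly = x.bracketPoly * y.bracketPoly := by
  simp [bracketPoly, brList]

theorem bracketPoly_br (x y : BExpr) :
    (br x y).bracketPoly =
      Finsupp.linearCombination ℤ MvPolynomial.X (crossing (x.varsL : Multiset ℕ) y.varsL) *
        (x.bracketPoly * y.bracketPoly) := by
  simp [bracketPoly, brList, bracketWeight, mul_left_comm]

theorem bracketPoly_leibniz (X Y Z : BExpr) :
    (br X (mul Y Z)).bracketPoly =
      (mul Y (br X Z)).bracketPoly + (mul (br X Y) Z).bracketPoly := by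
  simp only [bracketPoly_br, bracketPoly_mul, varsL, ← Multiset.coe_add, crossing_add_right,
    map_add]
  ring

end BExpr

namespace BCtx

theorem varsL_fill_perm (c : BCtx) {U V : BExpr} (h : V.varsL.Perm U.varsL) :
    (c.fill V).varsL.Perm (c.fill U).varsL := by
  induction c with
  | hole => exact h
  | brL c y ih | mulL c y ih => exact ih.append_right _
  | brR x c ih | mulR x c ih => exact ih.append_left _

theorem exists_bracketPoly_fill (c : BCtx) (U : BExpr) :
    ∃ q, ∀ V : BExpr, V.varsL.Perm U.varsL →
      (c.fill V).bracketPoly = q * V.bracketPoly := by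
  have coe_varsL_fill (c : BCtx) {V : BExpr} (h : V.varsL.Perm U.varsL) :
      ((c.fill V).varsL : Multiset ℕ) = (c.fill U).varsL :=
    Multiset.coe_eq_coe.2 (c.varsL_fill_perm h)
  induction c with
  | hole => exact ⟨1, fun V _ => (one_mul _).symm⟩
  | brL c y ih =>
    obtain ⟨q, hq⟩ := ih
    refine ⟨Finsupp.linearCombination ℤ MvPolynomial.X
      (crossing ((c.fill U).varsL : Multiset ℕ) y.varsL) * (q * y.bracketPoly), fun V hV => ?_⟩
    rw [fill, BExpr.bracketPoly_br, coe_varsL_fill c hV, hq V hV]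
    ring
  | brR x c ih =>
    obtain ⟨q, hq⟩ := ih
    refine ⟨Finsupp.linearCombination ℤ MvPolynomial.X
      (crossing (x.varsL : Multiset ℕ) (c.fill U).varsL) * (x.bracketPoly * q), fun V hV => ?_⟩
    rw [fill, BExpr.bracketPoly_br, coe_varsL_fill c hV, hq V hV]
    ring
  | mulL c y ih =>
    obtain ⟨q, hq⟩ := ih
    refine ⟨q * y.bracketPoly, fun V hV => ?_⟩
    rw [fill, BExpr.bracketPoly_mul, hq V hV]
    ring
  | mulR x c ih =>
    obtain ⟨q, hq⟩ := ih
    refine ⟨x.bracketPoly * q, fun V hV => ?_⟩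
    rw [fill, BExpr.bracketPoly_mul, hq V hV]
    ring

theorem bracketPoly_fill_leibniz (c : BCtx) (X Y Z : BExpr) :
    (c.fill (.br X (.mul Y Z))).bracketPoly =
      (c.fill (.mul Y (.br X Z))).bracketPoly + (c.fill (.mul (.br X Y) Z)).bracketPoly := by
  have perm_left : (BExpr.mul Y (.br X Z)).varsL.Perm (BExpr.br X (.mul Y Z)).varsL := by
    simpa only [BExpr.varsL, List.append_assoc] using
      List.perm_append_comm_assoc Y.varsL X.varsL Z.varsL
  have perm_right : (BExpr.mul (.br X Y) Z).varsL.Perm (BExpr.br X (.mul Y Z)).varsL := by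
    simp only [BExpr.varsL, List.append_assoc, List.Perm.refl]
  obtain ⟨q, hq⟩ := c.exists_bracketPoly_fill (.br X (.mul Y Z))
  rw [hq _ (.refl _), hq _ perm_left, hq _ perm_right, BExpr.bracketPoly_leibniz, mul_add]

end BCtx

/-- the configuration pairing between Diagrams and bracket expressions
respects the Leibniz rule: if `B` contains the subexpression `[X, Y·Z]`, `B'` is
obtained by substituting `Y·[X,Z]` for it and `B''` by substituting `[X,Y]·Z`, then
`⟨D,B⟩ = ⟨D,B'⟩ + ⟨D,B''⟩` for every Diagram `D`. -/
theorem pairing_respects_leibniz (n : ℕ) (D : DiagOn n) (c : BCtx) (X Y Z : BExpr)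
    (B B' B'' : BExprOn n)
    (hB : B.1 = c.fill (.br X (.mul Y Z)))
    (hB' : B'.1 = c.fill (.mul Y (.br X Z)))
    (hB'' : B''.1 = c.fill (.mul (.br X Y) Z)) :
    pairDB D.1 B.1 = pairDB D.1 B'.1 + pairDB D.1 B''.1 := by
  rw [← BExpr.coeff_bracketPoly B.2.1, ← BExpr.coeff_bracketPoly B'.2.1,
    ← BExpr.coeff_bracketPoly B''.2.1, hB, hB', hB'', c.bracketPoly_fill_leibniz,
    MvPolynomial.coeff_add]

end GTPairing
end
end
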